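/- For any dimension d ≥ 2, let c_d := ω_d / (2^{d+4} d^{d/2}), where ω_d is the volume of the unit ball in ℝ^d. Fix parameters C_0 ≥ 1, 0 < α ≤ 1/8 < 1 < N, and a, b, δ ∈ (0, 1/4) satisfying: Nα > (d−1)/2, 2b ≤ δ, a < b ≤ c_d, and C_0 · b^{Nα − (d−1)/2} < c_d. Then any probability measure μ supported inside [0,1]^d that satisfies the finite energy condition I_μ((d+1)/2 + α) ≤ C_0 and the spectral gap condition F_μ(a^{−N}) − F_μ(δ/b) ≤ a must obey ∫_{ℝ^d} |μ̂(ξ)|² σ̂(tξ) dξ ≥ c_d > 0 for every t ∈ [a, b]; in particular, Δ(supp μ) ⊇ [a, b]. -/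

import Mathlib

open MeasureTheory Set Metric Filter
open scoped ENNReal NNReal Topology

noncomputable section

abbrev Euc (d : ℕ) : Type := EuclideanSpace ℝ (Fin d)

/-- The closed unit cube `[0,1]^d`. -/
def unitCube (d : ℕ) : Set (Euc d) := {x | ∀ i, x i ∈ Icc (0:ℝ) 1}

/-- The distance set `Δ(E,F) = {|x-y| : x ∈ E, y ∈ F}`. -/
def distSet {d : ℕ} (E F : Set (Euc d)) : Set ℝ :=
  {t | ∃ x ∈ E, ∃ y ∈ F, dist x y = t}

/-- `Q` is a dyadic cube of side length `l`, i.e. `Q = 2^{-k}(m + [0,1]^d)`. -/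
def IsDyadicCube {d : ℕ} (Q : Set (Euc d)) (l : ℝ) : Prop :=
  ∃ (k : ℤ) (m : Fin d → ℤ), l = (2:ℝ) ^ (-k) ∧
    Q = {x | ∀ i, (m i : ℝ) * (2:ℝ) ^ (-k) ≤ x i ∧ x i ≤ ((m i : ℝ) + 1) * (2:ℝ) ^ (-k)}

/-- The `s`-dimensional dyadic Hausdorff content: the infimum of `∑ ℓ(Q_i)^s` over
countable covers of `E` by dyadic cubes. -/
def dyadicContent {d : ℕ} (s : ℝ) (E : Set (Euc d)) : ℝ≥0∞ :=
  ⨅ (Q : ℕ → Set (Euc d)) (l : ℕ → ℝ) (_ : ∀ i, IsDyadicCube (Q i) (l i))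
    (_ : E ⊆ ⋃ i, Q i), ∑' i, ENNReal.ofReal (l i ^ s)

/-- The normalized surface measure `σ` on the unit sphere `S^{d-1} ⊆ ℝ^d`. -/
def sphereMeasure (d : ℕ) : Measure (Metric.sphere (0 : Euc d) 1) :=
  ((volume : Measure (Euc d)).toSphere Set.univ)⁻¹ • (volume : Measure (Euc d)).toSphere

/-- The Fourier transform `σ̂(ξ) = ∫_{S^{d-1}} e^{-i x·ξ} dσ(x)` of the normalized
surface measure on the unit sphere. -/
def sphereFT (d : ℕ) (ξ : Euc d) : ℂ :=
  ∫ x : Metric.sphere (0 : Euc d) 1,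
    Complex.exp (-(Complex.I * ((inner ℝ (x : Euc d) ξ : ℝ) : ℂ))) ∂(sphereMeasure d)

/-- The `s`-energy `I_μ(s) = ∬ |x-y|^{-s} dμ(x) dμ(y)` of a measure. -/
def energy {d : ℕ} (μ : Measure (Euc d)) (s : ℝ) : ℝ≥0∞ :=
  ∫⁻ x, ∫⁻ y, edist x y ^ (-s) ∂μ ∂μ

/-- The Fourier transform `μ̂(ξ) = ∫ e^{-i x·ξ} dμ(x)` of a finite Borel measure. -/
def fourierM {d : ℕ} (μ : Measure (Euc d)) (ξ : Euc d) : ℂ :=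
  ∫ x, Complex.exp (-(Complex.I * ((inner ℝ x ξ : ℝ) : ℂ))) ∂μ

/-- The partial `L²`-Fourier integral `F_μ(T) = ∫_{|ξ| ≤ T} |μ̂(ξ)|² dξ`. -/
def FmuInt {d : ℕ} (μ : Measure (Euc d)) (T : ℝ) : ℝ :=
  ∫ ξ in {ξ : Euc d | ‖ξ‖ ≤ T}, ‖fourierM μ ξ‖ ^ 2

/-- The (topological) support of a measure: points all of whose balls have positive
measure. -/
def msupport {d : ℕ} (μ : Measure (Euc d)) : Set (Euc d) :=
  {x | ∀ r : ℝ, 0 < r → 0 < μ (Metric.ball x r)}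

/-- The dimensional constant `c_d = ω_d / (2^{d+4} d^{d/2})`, where `ω_d` is the
volume of the unit ball in `ℝ^d`. -/
def cdConst (d : ℕ) : ℝ :=
  (volume (Metric.ball (0 : Euc d) 1)).toReal / (2 ^ (d + 4) * (d : ℝ) ^ ((d : ℝ) / 2))

/-
The number `∫ |μ̂(ξ)|² σ̂(tξ) dξ` is formally the density at `0` of `X - Y + tU`, where `X, Y` have
law `μ` and `U` is uniform on the sphere, all independent. If `t` is not a distance between points
of the compact support, this law gives no mass to a neighbourhood of `0`, and Gaussian
regularisation shows that the integral vanishes.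

For the lower bound the frequencies are split at `T = δ / b` and `M = a ^ (-N)`. On `|ξ| ≤ T` one
has `σ̂(tξ) ≥ 1 - δ² / 2`, so the contribution is almost `F_μ(T) ≥ F_μ(1)`, which is at least `3/4`
of the volume of the unit ball because `μ` lives in a cube. On `T < |ξ| ≤ M` the bound `|σ̂| ≤ 1`
and the spectral gap cost at most `a`. On `|ξ| > M` the decay `|σ̂(η)| ≲ |η| ^ (-(d-1)/2)` turns the
tail into the Fourier representation of the `((d+1)/2 + α)`-energy with the extra factor `M ^ (-α)`.

The decay has to be explicit in `d`. The radial profile `f` of `σ̂` satisfies Bessel's equation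
`f'' + (d-1)/r f' + f = 0`. With `k = (d-1)/2`, the function `u = r ^ k f` satisfies `u'' = -q u`
with `q = 1 - k(k-1)/r²` monotone, so that `u² + u'² / q` (for `k ≥ 1`) or `u'² + q u²` (for
`k ≤ 1`) decreases from its value at `r = k`.
-/

section IntegralsOverCompactSets

variable {X : Type*} [TopologicalSpace X] [MeasurableSpace X] [OpensMeasurableSpace X]
  {σ : Measure X} [IsFiniteMeasure σ] {K : Set X}

lemma integrable_of_continuous_of_ae_mem (hK : IsCompact K) (hσ : ∀ᵐ x ∂σ, x ∈ K) {f : X → ℝ}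
    (hf : Continuous f) : Integrable f σ := by
  obtain ⟨C, hC⟩ := hK.exists_bound_of_continuousOn hf.continuousOn
  exact Integrable.of_bound hf.aestronglyMeasurable C (hσ.mono hC)

lemma hasDerivAt_integral_of_continuous (hK : IsCompact K) (hσ : ∀ᵐ x ∂σ, x ∈ K)
    {F F' : ℝ → X → ℝ} (hF : ∀ r, Continuous (F r)) (hF' : Continuous (Function.uncurry F'))
    (hderiv : ∀ r x, HasDerivAt (F · x) (F' r x) r) (r : ℝ) :
    HasDerivAt (fun r ↦ ∫ x, F r x ∂σ) (∫ x, F' r x ∂σ) r := by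
  obtain ⟨C, hC⟩ := ((isCompact_closedBall r 1).prod hK).exists_bound_of_continuousOn
    hF'.continuousOn
  refine (hasDerivAt_integral_of_dominated_loc_of_deriv_le (bound := fun _ ↦ C)
    (closedBall_mem_nhds r one_pos) ?_ ?_ ?_ ?_ (integrable_const C) ?_).2
  · exact .of_forall fun r ↦ (hF r).aestronglyMeasurable
  · exact integrable_of_continuous_of_ae_mem hK hσ (hF r)
  · exact (hF'.uncurry_left r).aestronglyMeasurable
  · filter_upwards [hσ] with x hx ρ hρ using hC (ρ, x) ⟨hρ, hx⟩
  · exact .of_forall fun x ρ _ ↦ hderiv ρ x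

end IntegralsOverCompactSets

section UniformMeasureOnSphere

variable {E : Type*} [NormedAddCommGroup E] [InnerProductSpace ℝ E]

lemma inner_reflection_span_cos_add_sin {e w : E} (he : ‖e‖ = 1) (hw : ‖w‖ = 1)
    (hew : inner ℝ e w = 0) (θ : ℝ) (x : E) :
    let R := (ℝ ∙ (Real.cos θ • e + Real.sin θ • w)).reflection
    inner ℝ (R x) e = Real.cos (2 * θ) * inner ℝ x e + Real.sin (2 * θ) * inner ℝ x w ∧
      inner ℝ (R x) w = Real.sin (2 * θ) * inner ℝ x e - Real.cos (2 * θ) * inner ℝ x w := by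
  have hwe : inner ℝ w e = 0 := real_inner_comm e w ▸ hew
  have hu : ‖Real.cos θ • e + Real.sin θ • w‖ ^ 2 = 1 := by
    rw [norm_add_sq_real, norm_smul, norm_smul, he, hw, inner_smul_left, inner_smul_right, hew]
    simp
  simp only [Submodule.reflection_singleton_apply, RCLike.ofReal_real_eq_id, id_eq, hu, div_one,
    inner_sub_left, inner_add_left, inner_add_right, inner_smul_left, inner_smul_right, two_smul,
    real_inner_self_eq_norm_sq, he, hw, hew, hwe, conj_trivial, Real.cos_two_mul',
    Real.sin_two_mul, real_inner_comm x]
  have := Real.cos_sq_add_sin_sq θ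
  constructor
  · linear_combination inner ℝ x e * this
  · linear_combination inner ℝ x w * this

variable [MeasurableSpace E]

/-- `σ` is carried by the unit sphere and invariant under all linear isometries; for a probability
measure on a finite-dimensional space this characterizes the normalized surface measure. -/
structure IsUniformOnSphere (σ : Measure E) : Prop where
  ae_norm_eq_one : ∀ᵐ x ∂σ, ‖x‖ = 1
  map_linearIsometryEquiv : ∀ R : E ≃ₗᵢ[ℝ] E, σ.map R = σ

/-- The cosine transform of `σ` along the ray spanned by `e`. When `σ` is the surface measure of
the unit sphere and `e` is a unit vector, it is the radial profile of `σ̂`. -/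
def radialProfile (σ : Measure E) (e : E) (r : ℝ) : ℝ := ∫ x, Real.cos (r * inner ℝ x e) ∂σ

/-- The derivative of `radialProfile σ e`. -/
def radialProfileDeriv (σ : Measure E) (e : E) (r : ℝ) : ℝ :=
  ∫ x, -(inner ℝ x e * Real.sin (r * inner ℝ x e)) ∂σ

namespace IsUniformOnSphere

variable {σ : Measure E} {e w : E}

lemma ae_mem_sphere (hσ : IsUniformOnSphere σ) : ∀ᵐ x ∂σ, x ∈ sphere (0 : E) 1 :=
  hσ.ae_norm_eq_one.mono fun _ ↦ mem_sphere_zero_iff_norm.2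

lemma ae_abs_inner_le (hσ : IsUniformOnSphere σ) (e : E) :
    ∀ᵐ x ∂σ, |inner ℝ x e| ≤ ‖e‖ := by
  filter_upwards [hσ.ae_norm_eq_one] with x hx
  simpa only [hx, one_mul] using abs_real_inner_le_norm x e

variable [BorelSpace E]

lemma integral_comp_linearIsometryEquiv (hσ : IsUniformOnSphere σ) (R : E ≃ₗᵢ[ℝ] E) (f : E → ℝ) :
    ∫ x, f (R x) ∂σ = ∫ x, f x ∂σ := by
  conv_rhs => rw [← hσ.map_linearIsometryEquiv R]
  exact (R.toHomeomorph.measurableEmbedding.integral_map f).symm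

variable [FiniteDimensional ℝ E]

section FiniteMeasure

variable [IsFiniteMeasure σ]

lemma integrable (hσ : IsUniformOnSphere σ) {f : E → ℝ} (hf : Continuous f) : Integrable f σ :=
  integrable_of_continuous_of_ae_mem (isCompact_sphere 0 1) hσ.ae_mem_sphere hf

lemma hasDerivAt_integral (hσ : IsUniformOnSphere σ) {F F' : ℝ → E → ℝ}
    (hF : ∀ r, Continuous (F r)) (hF' : Continuous (Function.uncurry F'))
    (hderiv : ∀ r x, HasDerivAt (F · x) (F' r x) r) (r : ℝ) :
    HasDerivAt (fun r ↦ ∫ x, F r x ∂σ) (∫ x, F' r x ∂σ) r :=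
  hasDerivAt_integral_of_continuous (isCompact_sphere 0 1) hσ.ae_mem_sphere hF hF' hderiv r

lemma hasDerivAt_radialProfile (hσ : IsUniformOnSphere σ) (e : E) (r : ℝ) :
    HasDerivAt (radialProfile σ e) (radialProfileDeriv σ e r) r := by
  refine hσ.hasDerivAt_integral (F := fun r x ↦ Real.cos (r * inner ℝ x e))
    (F' := fun r x ↦ -(inner ℝ x e * Real.sin (r * inner ℝ x e)))
    (fun r ↦ by fun_prop) (by fun_prop) (fun r x ↦ ?_) r
  exact ((hasDerivAt_mul_const (inner ℝ x e)).cos).congr_deriv (by ring)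

lemma hasDerivAt_radialProfileDeriv (hσ : IsUniformOnSphere σ) (e : E) (r : ℝ) :
    HasDerivAt (radialProfileDeriv σ e)
      (∫ x, -(inner ℝ x e ^ 2 * Real.cos (r * inner ℝ x e)) ∂σ) r := by
  refine hσ.hasDerivAt_integral (F := fun r x ↦ -(inner ℝ x e * Real.sin (r * inner ℝ x e)))
    (F' := fun r x ↦ -(inner ℝ x e ^ 2 * Real.cos (r * inner ℝ x e)))
    (fun r ↦ by fun_prop) (by fun_prop) (fun r x ↦ ?_) r
  exact (((hasDerivAt_mul_const (inner ℝ x e)).sin.const_mul _).fun_neg).congr_deriv (by ring)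

/-- Differentiate at `θ = 0` the integral of `⟪x, w⟫ sin (r ⟪x, e⟫)` composed with the reflection
in the line spanned by `cos θ • e + sin θ • w`: by invariance it does not depend on `θ`. -/
lemma integral_inner_mul_sin_sub_eq_zero (hσ : IsUniformOnSphere σ) (he : ‖e‖ = 1) (hw : ‖w‖ = 1)
    (hew : inner ℝ e w = 0) (r : ℝ) :
    ∫ x, (inner ℝ x e * Real.sin (r * inner ℝ x e) -
      r * inner ℝ x w ^ 2 * Real.cos (r * inner ℝ x e)) ∂σ = 0 := by
  let p (θ : ℝ) (x : E) := Real.cos (2 * θ) * inner ℝ x e + Real.sin (2 * θ) * inner ℝ x w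
  let q (θ : ℝ) (x : E) := Real.sin (2 * θ) * inner ℝ x e - Real.cos (2 * θ) * inner ℝ x w
  have p_deriv (θ x) : HasDerivAt (p · x) (-2 * q θ x) θ :=
    (((hasDerivAt_const_mul 2).cos.mul_const _).add
      ((hasDerivAt_const_mul 2).sin.mul_const _)).congr_deriv (by ring)
  have q_deriv (θ x) : HasDerivAt (q · x) (2 * p θ x) θ :=
    (((hasDerivAt_const_mul 2).sin.mul_const _).sub
      ((hasDerivAt_const_mul 2).cos.mul_const _)).congr_deriv (by ring)
  have deriv_integral := hσ.hasDerivAt_integral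
    (F := fun θ x ↦ q θ x * Real.sin (r * p θ x))
    (F' := fun θ x ↦ 2 * p θ x * Real.sin (r * p θ x) +
      q θ x * (Real.cos (r * p θ x) * (r * (-2 * q θ x))))
    (fun θ ↦ by fun_prop) (by fun_prop)
    (fun θ x ↦ (q_deriv θ x).mul ((p_deriv θ x).const_mul r).sin) 0
  have integral_const (θ) : ∫ x, q θ x * Real.sin (r * p θ x) ∂σ =
      ∫ x, inner ℝ x w * Real.sin (r * inner ℝ x e) ∂σ := by
    refine Eq.trans ?_ (hσ.integral_comp_linearIsometryEquiv
      (ℝ ∙ (Real.cos θ • e + Real.sin θ • w)).reflection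
      fun x ↦ inner ℝ x w * Real.sin (r * inner ℝ x e))
    simp only [inner_reflection_span_cos_add_sin he hw hew, p, q]
  simp only [integral_const] at deriv_integral
  have deriv_zero := deriv_integral.unique (hasDerivAt_const 0 _)
  simp only [p, q, mul_zero, Real.cos_zero, Real.sin_zero, one_mul, zero_mul, add_zero,
    zero_sub] at deriv_zero
  refine (mul_eq_zero_iff_left (two_ne_zero (α := ℝ))).1 ?_
  rw [← integral_const_mul, ← deriv_zero]
  congr 1 with x
  ring

lemma integral_finrank_sub_one_mul_inner_mul_sin_sub_eq_zero
    (hσ : IsUniformOnSphere σ) (he : ‖e‖ = 1) (r : ℝ) :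
    ∫ x, (((Module.finrank ℝ E : ℝ) - 1) * (inner ℝ x e * Real.sin (r * inner ℝ x e)) -
      r * (1 - inner ℝ x e ^ 2) * Real.cos (r * inner ℝ x e)) ∂σ = 0 := by
  have e_ne : e ≠ 0 := norm_ne_zero_iff.1 (he ▸ one_ne_zero)
  have finrank_pos : 0 < Module.finrank ℝ E := Module.finrank_pos_iff_exists_ne_zero.2 ⟨e, e_ne⟩
  let i₀ : Fin (Module.finrank ℝ E) := ⟨0, finrank_pos⟩
  obtain ⟨b, hb⟩ := Orthonormal.exists_orthonormalBasis_extension_of_card_eq (𝕜 := ℝ)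
    (Fintype.card_fin _).symm (v := fun _ : Fin (Module.finrank ℝ E) ↦ e) (s := {i₀})
    ⟨fun _ ↦ he, fun i j hij ↦ absurd (Subsingleton.elim i j) hij⟩
  have hbe : b i₀ = e := hb i₀ rfl
  have sum_zero : ∑ j ∈ Finset.univ.erase i₀, ∫ x, (inner ℝ x e * Real.sin (r * inner ℝ x e) -
      r * inner ℝ x (b j) ^ 2 * Real.cos (r * inner ℝ x e)) ∂σ = 0 := by
    refine Finset.sum_eq_zero fun j hj ↦
      hσ.integral_inner_mul_sin_sub_eq_zero he (b.orthonormal.1 j) ?_ r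
    rw [← hbe]
    exact b.orthonormal.2 (Finset.ne_of_mem_erase hj).symm
  rw [← integral_finsetSum _ fun j _ ↦ hσ.integrable (by fun_prop)] at sum_zero
  rw [← sum_zero]
  refine integral_congr_ae ?_
  filter_upwards [hσ.ae_norm_eq_one] with x hx
  have sum_sq : ∑ j ∈ Finset.univ.erase i₀, inner ℝ x (b j) ^ 2 = 1 - inner ℝ x e ^ 2 := by
    rw [Finset.sum_erase_eq_sub (Finset.mem_univ i₀), hbe]
    simpa [hx] using b.sum_sq_norm_inner_left x
  rw [Finset.sum_sub_distrib, Finset.sum_const, Finset.card_erase_of_mem (Finset.mem_univ i₀),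
    Finset.card_univ, Fintype.card_fin, nsmul_eq_mul, Nat.cast_sub finrank_pos, Nat.cast_one,
    ← Finset.sum_mul, ← Finset.mul_sum, sum_sq]

lemma hasDerivAt_radialProfileDeriv_bessel (hσ : IsUniformOnSphere σ) (he : ‖e‖ = 1) {r : ℝ}
    (hr : r ≠ 0) :
    HasDerivAt (radialProfileDeriv σ e) (-radialProfile σ e r -
      ((Module.finrank ℝ E : ℝ) - 1) / r * radialProfileDeriv σ e r) r := by
  refine (hσ.hasDerivAt_radialProfileDeriv e r).congr_deriv ?_
  have identity := hσ.integral_finrank_sub_one_mul_inner_mul_sin_sub_eq_zero he r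
  have expand : ∫ x, (((Module.finrank ℝ E : ℝ) - 1) *
        (inner ℝ x e * Real.sin (r * inner ℝ x e)) -
        r * (1 - inner ℝ x e ^ 2) * Real.cos (r * inner ℝ x e)) ∂σ =
      -((Module.finrank ℝ E : ℝ) - 1) * radialProfileDeriv σ e r - r * radialProfile σ e r -
        r * ∫ x, -(inner ℝ x e ^ 2 * Real.cos (r * inner ℝ x e)) ∂σ := by
    rw [radialProfileDeriv, radialProfile, ← integral_const_mul, ← integral_const_mul,
      ← integral_const_mul,
      ← integral_sub (hσ.integrable (by fun_prop)) (hσ.integrable (by fun_prop)),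
      ← integral_sub (hσ.integrable (by fun_prop)) (hσ.integrable (by fun_prop))]
    congr 1 with x
    ring
  rw [identity] at expand
  generalize ∫ x, -(inner ℝ x e ^ 2 * Real.cos (r * inner ℝ x e)) ∂σ = second_deriv at expand ⊢
  field_simp
  linarith

end FiniteMeasure

lemma radialProfile_sq_add_radialProfileDeriv_sq_le_one [IsProbabilityMeasure σ]
    (hσ : IsUniformOnSphere σ) (he : ‖e‖ = 1) (r : ℝ) :
    radialProfile σ e r ^ 2 + radialProfileDeriv σ e r ^ 2 ≤ 1 := by
  set A := radialProfile σ e r with hA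
  set B := radialProfileDeriv σ e r with hB
  have integral_eq : A ^ 2 + B ^ 2 = ∫ x, (A * Real.cos (r * inner ℝ x e) +
      B * -(inner ℝ x e * Real.sin (r * inner ℝ x e))) ∂σ := by
    rw [integral_add (hσ.integrable (by fun_prop)) (hσ.integrable (by fun_prop)),
      integral_const_mul, integral_const_mul, ← radialProfile, ← radialProfileDeriv, ← hA, ← hB,
      sq, sq]
  have integral_le : ∫ x, (A * Real.cos (r * inner ℝ x e) +
      B * -(inner ℝ x e * Real.sin (r * inner ℝ x e))) ∂σ ≤
      ∫ _, (A ^ 2 + B ^ 2 + 1) / 2 ∂σ := by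
    refine integral_mono_ae (hσ.integrable (by fun_prop)) (integrable_const _) ?_
    filter_upwards [hσ.ae_abs_inner_le e] with x hx
    have inner_sq_le : inner ℝ x e ^ 2 ≤ 1 := (sq_le_one_iff_abs_le_one _).2 (he ▸ hx)
    nlinarith [sq_nonneg (A - Real.cos (r * inner ℝ x e)),
      sq_nonneg (B + inner ℝ x e * Real.sin (r * inner ℝ x e)),
      Real.cos_sq_add_sin_sq (r * inner ℝ x e), sq_nonneg (Real.sin (r * inner ℝ x e))]
  rw [integral_const, probReal_univ, one_smul] at integral_le
  linarith

end IsUniformOnSphere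

end UniformMeasureOnSphere

section SoninMonotonicity

variable {u v q q' : ℝ → ℝ} {r₀ : ℝ}

lemma antitoneOn_sq_add_sq_div_of_oscillator (hu : ∀ r ∈ Ici r₀, HasDerivAt u (v r) r)
    (hv : ∀ r ∈ Ici r₀, HasDerivAt v (-(q r * u r)) r)
    (hq : ∀ r ∈ Ici r₀, HasDerivAt q (q' r) r) (q_pos : ∀ r ∈ Ici r₀, 0 < q r)
    (q'_nonneg : ∀ r ∈ Ici r₀, 0 ≤ q' r) :
    AntitoneOn (fun r ↦ u r ^ 2 + v r ^ 2 / q r) (Ici r₀) := by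
  have deriv_eq (r) (hr : r ∈ Ici r₀) :
      HasDerivAt (fun r ↦ u r ^ 2 + v r ^ 2 / q r) (-(v r ^ 2 * q' r / q r ^ 2)) r := by
    have q_ne := (q_pos r hr).ne'
    refine (((hu r hr).fun_pow 2).add (((hv r hr).fun_pow 2).div (hq r hr) q_ne)).congr_deriv ?_
    field_simp
    ring
  refine antitoneOn_of_hasDerivWithinAt_nonpos (convex_Ici r₀)
    (fun r hr ↦ (deriv_eq r hr).continuousAt.continuousWithinAt)
    (fun r hr ↦ (deriv_eq r (interior_subset hr)).hasDerivWithinAt) fun r hr ↦ ?_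
  have := q'_nonneg r (interior_subset hr)
  exact neg_nonpos.2 (by positivity)

lemma antitoneOn_sq_add_mul_sq_of_oscillator (hu : ∀ r ∈ Ici r₀, HasDerivAt u (v r) r)
    (hv : ∀ r ∈ Ici r₀, HasDerivAt v (-(q r * u r)) r)
    (hq : ∀ r ∈ Ici r₀, HasDerivAt q (q' r) r) (q'_nonpos : ∀ r ∈ Ici r₀, q' r ≤ 0) :
    AntitoneOn (fun r ↦ v r ^ 2 + q r * u r ^ 2) (Ici r₀) := by
  have deriv_eq (r) (hr : r ∈ Ici r₀) :
      HasDerivAt (fun r ↦ v r ^ 2 + q r * u r ^ 2) (q' r * u r ^ 2) r :=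
    (((hv r hr).fun_pow 2).add ((hq r hr).mul ((hu r hr).fun_pow 2))).congr_deriv (by ring)
  exact antitoneOn_of_hasDerivWithinAt_nonpos (convex_Ici r₀)
    (fun r hr ↦ (deriv_eq r hr).continuousAt.continuousWithinAt)
    (fun r hr ↦ (deriv_eq r (interior_subset hr)).hasDerivWithinAt)
    fun r hr ↦ mul_nonpos_of_nonpos_of_nonneg (q'_nonpos r (interior_subset hr)) (sq_nonneg _)

end SoninMonotonicity

section BesselEquation

variable {f g : ℝ → ℝ} {k : ℝ}

/-- The coefficient `q` of the normal form `u'' = -q u` of the equation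
`f'' = -f - (2k/r) f'` under the substitution `u = r ^ k f`. -/
def liouvilleCoeff (k r : ℝ) : ℝ := 1 - k * (k - 1) / r ^ 2

lemma hasDerivAt_liouvilleCoeff {r : ℝ} (hr : r ≠ 0) :
    HasDerivAt (liouvilleCoeff k) (2 * (k * (k - 1)) / r ^ 3) r := by
  refine (((hasDerivAt_const r (k * (k - 1))).fun_div (hasDerivAt_pow 2 r)
    (pow_ne_zero 2 hr)).const_sub 1).congr_deriv ?_
  field_simp
  simp only [zero_mul, Nat.cast_ofNat, Nat.add_one_sub_one, pow_one]
  ring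

lemma liouvilleCoeff_self (hk : k ≠ 0) : liouvilleCoeff k k = 1 / k := by
  rw [liouvilleCoeff]
  field_simp
  ring

/-- `f` solves `f'' + (2k/r) f' + f = 0` on `[k, ∞)`, and `g` is its derivative there. The radial
profile of the Fourier transform of the sphere in `ℝ^d` is the case `k = (d - 1) / 2`. -/
structure IsBesselSolution (k : ℝ) (f g : ℝ → ℝ) : Prop where
  hasDerivAt : ∀ r ∈ Ici k, HasDerivAt f (g r) r
  hasDerivAt_deriv : ∀ r ∈ Ici k, HasDerivAt g (-f r - 2 * k / r * g r) r

namespace IsBesselSolution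

lemma hasDerivAt_rpow_mul (h : IsBesselSolution k f g) (hk : 0 < k) {r : ℝ} (hr : r ∈ Ici k) :
    HasDerivAt (fun r ↦ r ^ k * f r) (r ^ k * (g r + k / r * f r)) r := by
  have r_ne : r ≠ 0 := (hk.trans_le hr).ne'
  refine ((Real.hasDerivAt_rpow_const (Or.inl r_ne)).mul (h.hasDerivAt r hr)).congr_deriv ?_
  rw [Real.rpow_sub_one r_ne]
  ring

lemma hasDerivAt_rpow_mul_deriv (h : IsBesselSolution k f g) (hk : 0 < k) {r : ℝ}
    (hr : r ∈ Ici k) :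
    HasDerivAt (fun r ↦ r ^ k * (g r + k / r * f r))
      (-(liouvilleCoeff k r * (r ^ k * f r))) r := by
  have r_ne : r ≠ 0 := (hk.trans_le hr).ne'
  refine ((Real.hasDerivAt_rpow_const (Or.inl r_ne)).mul ((h.hasDerivAt_deriv r hr).fun_add
    (((hasDerivAt_const r k).fun_div (hasDerivAt_id' r) r_ne).fun_mul
      (h.hasDerivAt r hr)))).congr_deriv ?_
  rw [Real.rpow_sub_one r_ne, liouvilleCoeff]
  field_simp
  ring

lemma sq_rpow_mul_le_of_one_le (h : IsBesselSolution k f g) (initial : f k ^ 2 + g k ^ 2 ≤ 1)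
    (hk : 1 ≤ k) {r : ℝ} (hr : k ≤ r) : (r ^ k * f r) ^ 2 ≤ (2 * k + 1) * (k ^ k) ^ 2 := by
  have k_pos : 0 < k := one_pos.trans_le hk
  have coeff_pos (r) (hr : r ∈ Ici k) : 0 < liouvilleCoeff k r := by
    have r_pos : 0 < r := k_pos.trans_le hr
    rw [liouvilleCoeff, sub_pos, div_lt_one (by positivity)]
    nlinarith [mem_Ici.1 hr]
  have coeff_deriv_nonneg (r) (hr : r ∈ Ici k) : 0 ≤ 2 * (k * (k - 1)) / r ^ 3 := by
    have r_pos : 0 < r := k_pos.trans_le hr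
    have : 0 ≤ k - 1 := sub_nonneg.2 hk
    positivity
  have sonin_antitone := antitoneOn_sq_add_sq_div_of_oscillator
    (fun r ↦ h.hasDerivAt_rpow_mul k_pos) (fun r ↦ h.hasDerivAt_rpow_mul_deriv k_pos)
    (fun r hr ↦ hasDerivAt_liouvilleCoeff (k_pos.trans_le hr).ne') coeff_pos coeff_deriv_nonneg
  calc (r ^ k * f r) ^ 2
      ≤ (r ^ k * f r) ^ 2 + (r ^ k * (g r + k / r * f r)) ^ 2 / liouvilleCoeff k r :=
        le_add_of_nonneg_right (div_nonneg (sq_nonneg _) (coeff_pos r hr).le)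
    _ ≤ (k ^ k * f k) ^ 2 + (k ^ k * (g k + k / k * f k)) ^ 2 / liouvilleCoeff k k :=
        sonin_antitone self_mem_Ici hr hr
    _ = (f k ^ 2 + k * (g k + f k) ^ 2) * (k ^ k) ^ 2 := by
        rw [liouvilleCoeff_self k_pos.ne', div_self k_pos.ne', one_div, div_inv_eq_mul]
        ring
    _ ≤ (2 * k + 1) * (k ^ k) ^ 2 := by
        gcongr ?_ * _
        nlinarith [mul_nonneg k_pos.le (sq_nonneg (g k - f k)), sq_nonneg (g k)]

lemma sq_rpow_mul_le_of_le_one (h : IsBesselSolution k f g) (initial : f k ^ 2 + g k ^ 2 ≤ 1)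
    (hk : 0 < k) (hk_le : k ≤ 1) {r : ℝ} (hr : k ≤ r) :
    (r ^ k * f r) ^ 2 ≤ (2 + 1 / k) * (k ^ k) ^ 2 := by
  have coeff_ge : 1 ≤ liouvilleCoeff k r := by
    have : k * (k - 1) / r ^ 2 ≤ 0 :=
      div_nonpos_of_nonpos_of_nonneg (mul_nonpos_of_nonneg_of_nonpos hk.le (by linarith))
        (sq_nonneg r)
    rw [liouvilleCoeff]
    linarith
  have coeff_deriv_nonpos (r) (hr : r ∈ Ici k) : 2 * (k * (k - 1)) / r ^ 3 ≤ 0 :=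
    div_nonpos_of_nonpos_of_nonneg (by nlinarith) (pow_nonneg (hk.le.trans hr) 3)
  have sonin_antitone := antitoneOn_sq_add_mul_sq_of_oscillator
    (fun r ↦ h.hasDerivAt_rpow_mul hk) (fun r ↦ h.hasDerivAt_rpow_mul_deriv hk)
    (fun r hr ↦ hasDerivAt_liouvilleCoeff (hk.trans_le hr).ne') coeff_deriv_nonpos
  calc (r ^ k * f r) ^ 2
      ≤ (r ^ k * (g r + k / r * f r)) ^ 2 + liouvilleCoeff k r * (r ^ k * f r) ^ 2 := by
        nlinarith [sq_nonneg (r ^ k * (g r + k / r * f r)), sq_nonneg (r ^ k * f r)]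
    _ ≤ (k ^ k * (g k + k / k * f k)) ^ 2 + liouvilleCoeff k k * (k ^ k * f k) ^ 2 :=
        sonin_antitone self_mem_Ici hr hr
    _ = ((g k + f k) ^ 2 + 1 / k * f k ^ 2) * (k ^ k) ^ 2 := by
        rw [liouvilleCoeff_self hk.ne', div_self hk.ne']
        ring
    _ ≤ (2 + 1 / k) * (k ^ k) ^ 2 := by
        have : 1 / k * f k ^ 2 ≤ 1 / k :=
          mul_le_of_le_one_right (by positivity) (by nlinarith [sq_nonneg (g k)])
        gcongr ?_ * _
        nlinarith [sq_nonneg (g k - f k)]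

lemma abs_le_mul_rpow_neg (h : IsBesselSolution k f g) (initial : f k ^ 2 + g k ^ 2 ≤ 1)
    (hk : 1 / 2 ≤ k) {r : ℝ} (hr : k ≤ r) : |f r| ≤ √(4 * k + 2) * k ^ k * r ^ (-k) := by
  have k_pos : 0 < k := by linarith
  have r_pos : 0 < r := k_pos.trans_le hr
  have sq_le : (r ^ k * f r) ^ 2 ≤ (4 * k + 2) * (k ^ k) ^ 2 := by
    rcases le_total 1 k with one_le | le_one
    · refine (h.sq_rpow_mul_le_of_one_le initial one_le hr).trans ?_
      gcongr ?_ * _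
      linarith
    · refine (h.sq_rpow_mul_le_of_le_one initial k_pos le_one hr).trans ?_
      have : 1 / k ≤ 4 * k := (div_le_iff₀ k_pos).2 (by nlinarith)
      gcongr ?_ * _
      linarith
  rw [Real.rpow_neg r_pos.le, ← div_eq_mul_inv, le_div_iff₀ (by positivity)]
  calc |f r| * r ^ k = |r ^ k * f r| := by
        rw [abs_mul, abs_of_nonneg (Real.rpow_nonneg r_pos.le k), mul_comm]
    _ ≤ √((4 * k + 2) * (k ^ k) ^ 2) := Real.abs_le_sqrt sq_le
    _ = √(4 * k + 2) * k ^ k := by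
        rw [Real.sqrt_mul (by positivity), Real.sqrt_sq (by positivity)]

end IsBesselSolution

end BesselEquation

section SphereDecay

variable {E : Type*} [NormedAddCommGroup E] [InnerProductSpace ℝ E] [FiniteDimensional ℝ E]
  [MeasurableSpace E] [BorelSpace E] {σ : Measure E} {e : E}

namespace IsUniformOnSphere

lemma isBesselSolution_radialProfile [IsFiniteMeasure σ] (hσ : IsUniformOnSphere σ)
    (he : ‖e‖ = 1) (hE : 2 ≤ Module.finrank ℝ E) :
    IsBesselSolution (((Module.finrank ℝ E : ℝ) - 1) / 2) (radialProfile σ e)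
      (radialProfileDeriv σ e) where
  hasDerivAt r _ := hσ.hasDerivAt_radialProfile e r
  hasDerivAt_deriv r hr := by
    have finrank_ge : (2 : ℝ) ≤ Module.finrank ℝ E := mod_cast hE
    have r_pos : 0 < r := lt_of_lt_of_le (by linarith) (mem_Ici.1 hr)
    refine (hσ.hasDerivAt_radialProfileDeriv_bessel he r_pos.ne').congr_deriv ?_
    ring

end IsUniformOnSphere

/-- The constant in the decay estimate `|σ̂(ξ)| ≤ decayConst d * |ξ| ^ (-(d - 1) / 2)`, valid for
`|ξ| ≥ (d - 1) / 2`. -/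
def decayConst (d : ℕ) : ℝ := √(2 * d) * (((d : ℝ) - 1) / 2) ^ (((d : ℝ) - 1) / 2)

lemma IsUniformOnSphere.abs_radialProfile_le [IsProbabilityMeasure σ] (hσ : IsUniformOnSphere σ)
    (he : ‖e‖ = 1) (hE : 2 ≤ Module.finrank ℝ E) {r : ℝ}
    (hr : ((Module.finrank ℝ E : ℝ) - 1) / 2 ≤ r) :
    |radialProfile σ e r| ≤
      decayConst (Module.finrank ℝ E) * r ^ (-(((Module.finrank ℝ E : ℝ) - 1) / 2)) := by
  have finrank_ge : (2 : ℝ) ≤ Module.finrank ℝ E := mod_cast hE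
  have bound := (hσ.isBesselSolution_radialProfile he hE).abs_le_mul_rpow_neg
    (hσ.radialProfile_sq_add_radialProfileDeriv_sq_le_one he _) (by linarith) hr
  rwa [show 4 * (((Module.finrank ℝ E : ℝ) - 1) / 2) + 2 = 2 * Module.finrank ℝ E by ring] at bound

end SphereDecay

section FourierTransform

lemma re_charFun_eq_integral_cos {E : Type*} [SeminormedAddCommGroup E] [InnerProductSpace ℝ E]
    [MeasurableSpace E] [BorelSpace E] (ν : Measure E) [IsFiniteMeasure ν] (ξ : E) :
    (charFun ν ξ).re = ∫ x, Real.cos (inner ℝ x ξ) ∂ν := by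
  have integrable_exp : Integrable (fun x ↦ Complex.exp (inner ℝ x ξ * Complex.I)) ν :=
    .of_bound (by fun_prop) 1 (.of_forall fun x ↦ (Complex.norm_exp_ofReal_mul_I _).le)
  rw [charFun_apply, ← RCLike.re_eq_complex_re, ← integral_re integrable_exp]
  simp only [RCLike.re_eq_complex_re, Complex.exp_ofReal_mul_I_re]

variable {d : ℕ}

lemma fourierM_eq_charFun (μ : Measure (Euc d)) (ξ : Euc d) : fourierM μ ξ = charFun μ (-ξ) := by
  simp only [fourierM, charFun_apply, inner_neg_right, Complex.ofReal_neg, neg_mul,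
    mul_comm Complex.I]

lemma norm_fourierM (μ : Measure (Euc d)) (ξ : Euc d) : ‖fourierM μ ξ‖ = ‖charFun μ ξ‖ := by
  rw [fourierM_eq_charFun, charFun_neg, RCLike.norm_conj]

lemma continuous_norm_fourierM_sq (μ : Measure (Euc d)) [IsFiniteMeasure μ] :
    Continuous fun ξ ↦ ‖fourierM μ ξ‖ ^ 2 := by
  simp only [norm_fourierM]
  exact continuous_charFun.norm.pow 2

end FourierTransform

section SphereMeasure

open scoped Pointwise

/-- The normalized surface measure of the unit sphere, as a measure on the ambient space. -/
def ambientSphereMeasure (d : ℕ) : Measure (Euc d) := (sphereMeasure d).map Subtype.val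

variable {d : ℕ}

lemma ambientSphereMeasure_apply {A : Set (Euc d)} (hA : MeasurableSet A) :
    ambientSphereMeasure d A = ((volume : Measure (Euc d)).toSphere univ)⁻¹ *
      (Module.finrank ℝ (Euc d) * volume (Ioo (0 : ℝ) 1 • (A ∩ sphere (0 : Euc d) 1))) := by
  rw [ambientSphereMeasure, Measure.map_apply (by fun_prop) hA, sphereMeasure, Measure.smul_apply,
    Measure.toSphere_apply' _ (measurable_subtype_coe hA), smul_eq_mul,
    Subtype.image_preimage_coe, inter_comm]

lemma Ioo_smul_preimage_inter_sphere (R : Euc d ≃ₗᵢ[ℝ] Euc d) (A : Set (Euc d)) :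
    Ioo (0 : ℝ) 1 • (R ⁻¹' A ∩ sphere 0 1) = R ⁻¹' (Ioo (0 : ℝ) 1 • (A ∩ sphere 0 1)) := by
  ext x
  simp only [Set.mem_smul, mem_preimage, mem_inter_iff, mem_sphere_zero_iff_norm]
  constructor
  · rintro ⟨r, hr, y, ⟨hyA, hy⟩, rfl⟩
    exact ⟨r, hr, R y, ⟨hyA, (R.norm_map y).trans hy⟩, (R.map_smul r y).symm⟩
  · rintro ⟨r, hr, y, ⟨hyA, hy⟩, hyx⟩
    refine ⟨r, hr, R.symm y, ⟨by rwa [R.apply_symm_apply], (R.symm.norm_map y).trans hy⟩, ?_⟩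
    rw [← R.symm.map_smul, hyx, R.symm_apply_apply]

lemma isUniformOnSphere_ambientSphereMeasure (d : ℕ) :
    IsUniformOnSphere (ambientSphereMeasure d) where
  ae_norm_eq_one := by
    rw [ambientSphereMeasure, ae_map_iff (by fun_prop) (measurableSet_eq_fun (by fun_prop)
      (by fun_prop))]
    exact .of_forall fun x ↦ norm_eq_of_mem_sphere x
  map_linearIsometryEquiv R := by
    ext A hA
    have hRA : MeasurableSet (R ⁻¹' A) := R.continuous.measurable hA
    rw [Measure.map_apply R.continuous.measurable hA, ambientSphereMeasure_apply hRA,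
      ambientSphereMeasure_apply hA, Ioo_smul_preimage_inter_sphere]
    congr 2
    exact R.measurePreserving.measure_preimage_equiv (f := R.toHomeomorph.toMeasurableEquiv) _

lemma isProbabilityMeasure_ambientSphereMeasure (hd : d ≠ 0) :
    IsProbabilityMeasure (ambientSphereMeasure d) := by
  have surface_ne_zero : (volume : Measure (Euc d)).toSphere univ ≠ 0 := by
    rw [Measure.toSphere_apply_univ, finrank_euclideanSpace_fin]
    exact mul_ne_zero (Nat.cast_ne_zero.2 hd) (measure_ball_pos _ _ one_pos).ne'
  have : IsProbabilityMeasure (sphereMeasure d) :=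
    ⟨ENNReal.inv_mul_cancel surface_ne_zero (measure_ne_top _ _)⟩
  exact Measure.isProbabilityMeasure_map (by fun_prop)

lemma sphereFT_eq_fourierM (ξ : Euc d) : sphereFT d ξ = fourierM (ambientSphereMeasure d) ξ := by
  rw [sphereFT, fourierM, ambientSphereMeasure, integral_map (by fun_prop) (by fun_prop)]

lemma re_sphereFT_eq_re_charFun (ξ : Euc d) :
    (sphereFT d ξ).re = (charFun (ambientSphereMeasure d) ξ).re := by
  rw [sphereFT_eq_fourierM, fourierM_eq_charFun, charFun_neg, Complex.conj_re]

lemma re_sphereFT_eq_integral_cos (hd : d ≠ 0) (ξ : Euc d) :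
    (sphereFT d ξ).re = ∫ x, Real.cos (inner ℝ x ξ) ∂ambientSphereMeasure d := by
  have := isProbabilityMeasure_ambientSphereMeasure hd
  rw [re_sphereFT_eq_re_charFun, re_charFun_eq_integral_cos]

lemma continuous_re_sphereFT (hd : d ≠ 0) : Continuous fun ξ ↦ (sphereFT d ξ).re := by
  have := isProbabilityMeasure_ambientSphereMeasure hd
  simp only [re_sphereFT_eq_re_charFun]
  exact Complex.continuous_re.comp continuous_charFun

lemma abs_re_sphereFT_le_one (hd : d ≠ 0) (ξ : Euc d) : |(sphereFT d ξ).re| ≤ 1 := by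
  have := isProbabilityMeasure_ambientSphereMeasure hd
  rw [re_sphereFT_eq_re_charFun]
  exact (Complex.abs_re_le_norm _).trans (norm_charFun_le_one ξ)

lemma one_sub_norm_sq_div_two_le_re_sphereFT (hd : d ≠ 0) (ξ : Euc d) :
    1 - ‖ξ‖ ^ 2 / 2 ≤ (sphereFT d ξ).re := by
  have := isProbabilityMeasure_ambientSphereMeasure hd
  have hσ := isUniformOnSphere_ambientSphereMeasure d
  calc 1 - ‖ξ‖ ^ 2 / 2 = ∫ _, (1 - ‖ξ‖ ^ 2 / 2) ∂ambientSphereMeasure d := by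
        rw [integral_const, probReal_univ, one_smul]
    _ ≤ ∫ x, Real.cos (inner ℝ x ξ) ∂ambientSphereMeasure d := by
        refine integral_mono_ae (integrable_const _) (hσ.integrable (by fun_prop)) ?_
        filter_upwards [hσ.ae_abs_inner_le ξ] with x hx
        linarith [sq_le_sq' (abs_le.1 hx).1 (abs_le.1 hx).2,
          Real.one_sub_sq_div_two_le_cos (x := inner ℝ x ξ)]
    _ = (sphereFT d ξ).re := (re_sphereFT_eq_integral_cos hd ξ).symm

lemma abs_re_sphereFT_le (hd : 2 ≤ d) {ξ : Euc d} (hξ : ((d : ℝ) - 1) / 2 ≤ ‖ξ‖) :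
    |(sphereFT d ξ).re| ≤ decayConst d * ‖ξ‖ ^ (-(((d : ℝ) - 1) / 2)) := by
  have := isProbabilityMeasure_ambientSphereMeasure (d := d) (by lia)
  have d_ge : (2 : ℝ) ≤ d := mod_cast hd
  have ξ_ne : ξ ≠ 0 := norm_pos_iff.1 (by linarith)
  have re_eq : (sphereFT d ξ).re = radialProfile (ambientSphereMeasure d) (‖ξ‖⁻¹ • ξ) ‖ξ‖ := by
    simp only [re_sphereFT_eq_integral_cos (d := d) (by lia), radialProfile, inner_smul_right,
      mul_inv_cancel_left₀ (norm_ne_zero_iff.2 ξ_ne)]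
  have decay := (isUniformOnSphere_ambientSphereMeasure d).abs_radialProfile_le (r := ‖ξ‖)
    (norm_smul_inv_norm (𝕜 := ℝ) ξ_ne)
  rw [finrank_euclideanSpace_fin] at decay
  rw [re_eq]
  exact decay hd hξ

end SphereMeasure

section GaussianRegularization

variable {E : Type*} [NormedAddCommGroup E] [InnerProductSpace ℝ E]

/-- The Fourier transform `∫ exp (-ε |ξ|²) exp (i x·ξ) dξ` of a Gaussian, in closed form. -/
def gaussianFT (ε : ℝ) (x : E) : ℝ :=
  (Real.pi / ε) ^ ((Module.finrank ℝ E : ℝ) / 2) * Real.exp (-(‖x‖ ^ 2 / (4 * ε)))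

lemma gaussianFT_nonneg {ε : ℝ} (hε : 0 ≤ ε) (x : E) : 0 ≤ gaussianFT ε x := by
  have := Real.pi_pos
  unfold gaussianFT
  positivity

lemma gaussianFT_le_of_norm_le {ε η : ℝ} (hε : 0 ≤ ε) (hη : 0 ≤ η) {x : E} (hx : η ≤ ‖x‖) :
    gaussianFT ε x ≤ (Real.pi / ε) ^ ((Module.finrank ℝ E : ℝ) / 2) *
      Real.exp (-(η ^ 2 / (4 * ε))) := by
  have := Real.pi_pos
  unfold gaussianFT
  gcongr

lemma continuous_gaussianFT (ε : ℝ) : Continuous (gaussianFT ε : E → ℝ) := by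
  unfold gaussianFT
  fun_prop

variable [MeasurableSpace E] [BorelSpace E] {ν : Measure E} [IsFiniteMeasure ν] {ε : ℝ}

lemma integrable_gaussianFT (hε : 0 ≤ ε) : Integrable (gaussianFT ε) ν := by
  refine .of_bound (continuous_gaussianFT ε).aestronglyMeasurable
    ((Real.pi / ε) ^ ((Module.finrank ℝ E : ℝ) / 2) * Real.exp (-(0 ^ 2 / (4 * ε))))
    (.of_forall fun x ↦ ?_)
  rw [Real.norm_of_nonneg (gaussianFT_nonneg hε x)]
  exact gaussianFT_le_of_norm_le hε le_rfl (norm_nonneg x)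

lemma integral_gaussianFT_le {η : ℝ} (hε : 0 < ε) (hη : 0 ≤ η) (hν : ∀ᵐ x ∂ν, η ≤ ‖x‖) :
    ∫ x, gaussianFT ε x ∂ν ≤ (ν.real univ * Real.pi ^ ((Module.finrank ℝ E : ℝ) / 2)) *
      (ε⁻¹ ^ ((Module.finrank ℝ E : ℝ) / 2) * Real.exp (-(η ^ 2 / 4) * ε⁻¹)) := by
  refine (integral_mono_ae (integrable_gaussianFT hε.le) (integrable_const _)
    (hν.mono fun x ↦ gaussianFT_le_of_norm_le hε.le hη)).trans_eq ?_
  rw [integral_const, smul_eq_mul, div_eq_mul_inv, Real.mul_rpow Real.pi_pos.le (by positivity)]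
  ring_nf

variable [FiniteDimensional ℝ E]

lemma integrable_exp_neg_mul_sq_norm (hε : 0 < ε) :
    Integrable (fun ξ : E ↦ Real.exp (-ε * ‖ξ‖ ^ 2)) := by
  have complex_integrable := GaussianFourier.integrable_cexp_neg_mul_sq_norm_add (V := E)
    (b := (ε : ℂ)) (by simpa using hε) 0 0
  simpa [Complex.norm_exp, ← Complex.ofReal_pow] using complex_integrable.norm

lemma integrable_charFun_mul_exp_neg_mul_sq_norm (hε : 0 < ε) :
    Integrable (fun ξ : E ↦ charFun ν ξ * (Real.exp (-ε * ‖ξ‖ ^ 2) : ℂ)) :=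
  (integrable_exp_neg_mul_sq_norm hε).ofReal.bdd_mul (c := ν.real univ)
    continuous_charFun.aestronglyMeasurable (.of_forall fun _ ↦ norm_charFun_le _)

lemma integral_charFun_mul_exp_neg_mul_sq_norm (hε : 0 < ε) :
    ∫ ξ, charFun ν ξ * (Real.exp (-ε * ‖ξ‖ ^ 2) : ℂ) = (∫ x, gaussianFT ε x ∂ν : ℝ) := by
  have kernel_eq (ξ : E) : charFun ν ξ * (Real.exp (-ε * ‖ξ‖ ^ 2) : ℂ) =
      ∫ x, Complex.exp (-(ε : ℂ) * ‖ξ‖ ^ 2 + Complex.I * (inner ℝ x ξ : ℝ)) ∂ν := by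
    rw [charFun_apply, ← integral_mul_const]
    congr 1 with x
    rw [Complex.ofReal_exp, ← Complex.exp_add]
    push_cast
    ring_nf
  have kernel_integrable : Integrable (Function.uncurry fun ξ x : E ↦
      Complex.exp (-(ε : ℂ) * ‖ξ‖ ^ 2 + Complex.I * (inner ℝ x ξ : ℝ))) (volume.prod ν) := by
    refine ((integrable_exp_neg_mul_sq_norm hε).comp_fst ν).mono' (by fun_prop)
      (.of_forall fun p ↦ ?_)
    simp [Function.uncurry, Complex.norm_exp, ← Complex.ofReal_pow]
  simp_rw [kernel_eq]
  rw [integral_integral_swap kernel_integrable, ← integral_complex_ofReal]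
  congr 1 with x
  rw [GaussianFourier.integral_cexp_neg_mul_sq_norm_add (by simpa using hε), gaussianFT,
    Complex.ofReal_mul, Complex.ofReal_exp, Complex.ofReal_cpow (by positivity), Complex.I_sq]
  push_cast
  ring_nf

lemma integral_re_charFun_mul_exp_neg_mul_sq_norm (hε : 0 < ε) :
    ∫ ξ, (charFun ν ξ).re * Real.exp (-ε * ‖ξ‖ ^ 2) = ∫ x, gaussianFT ε x ∂ν := by
  have re_eq := integral_re (integrable_charFun_mul_exp_neg_mul_sq_norm (ν := ν) hε)
  simp only [RCLike.re_eq_complex_re, Complex.re_mul_ofReal] at re_eq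
  rw [re_eq, integral_charFun_mul_exp_neg_mul_sq_norm hε, Complex.ofReal_re]

lemma tendsto_integral_mul_exp_neg_inv_mul_sq_norm {f : E → ℝ} (hf : Integrable f) :
    Tendsto (fun x : ℝ ↦ ∫ ξ, f ξ * Real.exp (-x⁻¹ * ‖ξ‖ ^ 2)) atTop (𝓝 (∫ ξ, f ξ)) := by
  refine tendsto_integral_filter_of_dominated_convergence (fun ξ ↦ ‖f ξ‖)
    (.of_forall fun x ↦ hf.aestronglyMeasurable.mul (by fun_prop)) ?_ hf.norm
    (.of_forall fun ξ ↦ ?_)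
  · filter_upwards [eventually_gt_atTop 0] with x hx
    refine .of_forall fun ξ ↦ ?_
    rw [norm_mul, Real.norm_of_nonneg (Real.exp_nonneg _)]
    refine mul_le_of_le_one_right (norm_nonneg _) (Real.exp_le_one_iff.2 ?_)
    rw [neg_mul]
    exact neg_nonpos.2 (by positivity)
  · have exponent : Tendsto (fun x : ℝ ↦ -x⁻¹ * ‖ξ‖ ^ 2) atTop (𝓝 0) := by
      simpa using tendsto_inv_atTop_zero.neg.mul_const (‖ξ‖ ^ 2)
    simpa using ((Real.continuous_exp.tendsto 0).comp exponent).const_mul (f ξ)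

lemma integral_re_charFun_eq_zero {η : ℝ} (hη : 0 < η) (hν : ∀ᵐ x ∂ν, η ≤ ‖x‖)
    (hint : Integrable fun ξ : E ↦ (charFun ν ξ).re) : ∫ ξ : E, (charFun ν ξ).re = 0 := by
  refine tendsto_nhds_unique (tendsto_integral_mul_exp_neg_inv_mul_sq_norm hint) ?_
  have bound_tendsto := (tendsto_rpow_mul_exp_neg_mul_atTop_nhds_zero
    ((Module.finrank ℝ E : ℝ) / 2) (η ^ 2 / 4) (by positivity)).const_mul
      (ν.real univ * Real.pi ^ ((Module.finrank ℝ E : ℝ) / 2))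
  rw [mul_zero] at bound_tendsto
  refine squeeze_zero' ?_ ?_ bound_tendsto <;>
    filter_upwards [eventually_gt_atTop 0] with x hx <;>
    rw [integral_re_charFun_mul_exp_neg_mul_sq_norm (inv_pos.2 hx)]
  · exact integral_nonneg fun _ ↦ gaussianFT_nonneg (inv_pos.2 hx).le _
  · simpa only [inv_inv] using integral_gaussianFT_le (inv_pos.2 hx) hη.le hν

end GaussianRegularization

section GammaIntegrals

lemma integrableOn_rpow_mul_exp_neg_mul_Ioi {p c : ℝ} (hp : 0 < p) (hc : 0 < c) :
    IntegrableOn (fun τ : ℝ ↦ τ ^ (p - 1) * Real.exp (-(c * τ))) (Ioi 0) := by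
  simpa only [Real.rpow_one, neg_mul] using
    integrableOn_rpow_mul_exp_neg_mul_rpow (s := p - 1) (p := 1) (by linarith) one_pos hc

lemma lintegral_rpow_mul_exp_neg_mul_Ioi {p c : ℝ} (hp : 0 < p) (hc : 0 < c) :
    ∫⁻ τ in Ioi (0 : ℝ), ENNReal.ofReal (τ ^ (p - 1) * Real.exp (-(c * τ))) =
      ENNReal.ofReal (c ^ (-p) * Real.Gamma p) := by
  rw [← ofReal_integral_eq_lintegral_ofReal (integrableOn_rpow_mul_exp_neg_mul_Ioi hp hc),
    Real.integral_rpow_mul_exp_neg_mul_Ioi hp hc, one_div, Real.inv_rpow hc.le,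
    Real.rpow_neg hc.le]
  filter_upwards [ae_restrict_mem measurableSet_Ioi] with τ hτ
  exact mul_nonneg (Real.rpow_nonneg (mem_Ioi.1 hτ).le _) (Real.exp_nonneg _)

lemma rpow_neg_one_substitution (q c : ℝ) :
    EqOn (fun τ : ℝ ↦ (|(-1 : ℝ)| * τ ^ ((-1 : ℝ) - 1)) •
        ((τ ^ (-1 : ℝ)) ^ (q - 1) * Real.exp (-(c * τ ^ (-1 : ℝ)))))
      (fun τ ↦ τ ^ (-q - 1) * Real.exp (-(c / τ))) (Ioi 0) := by
  intro τ hτ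
  have τ_pos : 0 < τ := hτ
  simp only [smul_eq_mul, abs_neg, abs_one, one_mul]
  rw [← Real.rpow_mul τ_pos.le, ← mul_assoc, ← Real.rpow_add τ_pos, Real.rpow_neg_one,
    div_eq_mul_inv]
  ring_nf

lemma lintegral_rpow_mul_exp_neg_div_Ioi {q c : ℝ} (hq : 0 < q) (hc : 0 < c) :
    ∫⁻ τ in Ioi (0 : ℝ), ENNReal.ofReal (τ ^ (-q - 1) * Real.exp (-(c / τ))) =
      ENNReal.ofReal (c ^ (-q) * Real.Gamma q) := by
  have integrable : IntegrableOn (fun τ : ℝ ↦ τ ^ (-q - 1) * Real.exp (-(c / τ))) (Ioi 0) :=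
    ((integrableOn_Ioi_comp_rpow_iff _ (by norm_num)).2
      (integrableOn_rpow_mul_exp_neg_mul_Ioi hq hc)).congr_fun
      (rpow_neg_one_substitution q c) measurableSet_Ioi
  have integral_eq := Real.integral_rpow_mul_exp_neg_mul_Ioi hq hc
  rw [← integral_comp_rpow_Ioi _ (p := -1) (by norm_num),
    setIntegral_congr_fun measurableSet_Ioi (rpow_neg_one_substitution q c)] at integral_eq
  rw [← ofReal_integral_eq_lintegral_ofReal integrable, integral_eq, one_div, Real.inv_rpow hc.le,
    Real.rpow_neg hc.le]
  filter_upwards [ae_restrict_mem measurableSet_Ioi] with τ hτ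
  exact mul_nonneg (Real.rpow_nonneg (mem_Ioi.1 hτ).le _) (Real.exp_nonneg _)

lemma ofReal_Gamma_mul_rpow_eq_lintegral {p a r : ℝ} (hp : 0 < p) (ha : 0 ≤ a) (hr : 0 < r) :
    ENNReal.ofReal (Real.Gamma p) * ENNReal.ofReal (a * r ^ (-(2 * p))) =
      ∫⁻ τ in Ioi (0 : ℝ), ENNReal.ofReal (τ ^ (p - 1)) *
        ENNReal.ofReal (a * Real.exp (-τ * r ^ 2)) := by
  have Gamma_eq := lintegral_rpow_mul_exp_neg_mul_Ioi hp (c := r ^ 2) (by positivity)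
  rw [← Real.rpow_natCast_mul hr.le, Nat.cast_ofNat, mul_neg] at Gamma_eq
  rw [← ENNReal.ofReal_mul (Real.Gamma_pos_of_pos hp).le,
    show Real.Gamma p * (a * r ^ (-(2 * p))) = a * (r ^ (-(2 * p)) * Real.Gamma p) by ring,
    ENNReal.ofReal_mul ha, ← Gamma_eq, ← lintegral_const_mul _ (by fun_prop)]
  refine setLIntegral_congr_fun measurableSet_Ioi fun τ hτ ↦ ?_
  have τ_pos : 0 < τ := hτ
  rw [← ENNReal.ofReal_mul ha, ← ENNReal.ofReal_mul (by positivity)]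
  ring_nf

end GammaIntegrals

section RieszEnergy

variable {E : Type*} [NormedAddCommGroup E] [InnerProductSpace ℝ E]

lemma lintegral_rpow_mul_gaussianFT_le {s : ℝ} (hs : 0 < s) (z : E) :
    ∫⁻ τ in Ioi (0 : ℝ), ENNReal.ofReal (τ ^ (((Module.finrank ℝ E : ℝ) - s) / 2 - 1)) *
        ENNReal.ofReal (gaussianFT τ z) ≤
      ENNReal.ofReal (Real.pi ^ ((Module.finrank ℝ E : ℝ) / 2) * 2 ^ s * Real.Gamma (s / 2)) *
        ‖z‖ₑ ^ (-s) := by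
  have := Real.Gamma_pos_of_pos (half_pos hs)
  have pi_pos := Real.pi_pos
  rcases eq_or_ne z 0 with rfl | z_ne
  · rw [enorm_zero, ENNReal.zero_rpow_of_neg (by linarith), ENNReal.mul_top]
    · exact le_top
    · exact (ENNReal.ofReal_pos.2 (by positivity)).ne'
  have norm_pos : 0 < ‖z‖ := norm_pos_iff.2 z_ne
  have norm_rpow : (‖z‖ ^ 2 / 4) ^ (-(s / 2)) = 2 ^ s * ‖z‖ ^ (-s) := by
    rw [show ‖z‖ ^ 2 / 4 = (‖z‖ / 2) ^ (2 : ℝ) by rw [Real.rpow_two]; ring,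
      ← Real.rpow_mul (by positivity), show (2 : ℝ) * -(s / 2) = -s by ring,
      Real.div_rpow norm_pos.le two_pos.le, Real.rpow_neg two_pos.le, div_inv_eq_mul, mul_comm]
  have integrand_eq : EqOn
      (fun τ : ℝ ↦ ENNReal.ofReal (τ ^ (((Module.finrank ℝ E : ℝ) - s) / 2 - 1)) *
        ENNReal.ofReal (gaussianFT τ z))
      (fun τ ↦ ENNReal.ofReal (Real.pi ^ ((Module.finrank ℝ E : ℝ) / 2)) *
        ENNReal.ofReal (τ ^ (-(s / 2) - 1) * Real.exp (-(‖z‖ ^ 2 / 4 / τ)))) (Ioi 0) := by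
    intro τ hτ
    have τ_pos : 0 < τ := hτ
    beta_reduce
    rw [← ENNReal.ofReal_mul (by positivity), ← ENNReal.ofReal_mul (by positivity), gaussianFT,
      Real.div_rpow pi_pos.le τ_pos.le, div_div, show ((Module.finrank ℝ E : ℝ) - s) / 2 - 1 =
        (-(s / 2) - 1) + (Module.finrank ℝ E : ℝ) / 2 by ring, Real.rpow_add τ_pos]
    field_simp
  rw [setLIntegral_congr_fun measurableSet_Ioi integrand_eq, lintegral_const_mul _ (by fun_prop),
    lintegral_rpow_mul_exp_neg_div_Ioi (by linarith) (by positivity), norm_rpow, ← ofReal_norm,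
    ENNReal.ofReal_rpow_of_pos norm_pos, ← ENNReal.ofReal_mul (by positivity),
    ← ENNReal.ofReal_mul (by positivity)]
  exact le_of_eq (by ring_nf)

variable [FiniteDimensional ℝ E] [MeasurableSpace E] [BorelSpace E] {ν : Measure E}
  [IsFiniteMeasure ν]

lemma lintegral_re_charFun_mul_exp_neg_mul_sq_norm (hν : ∀ ξ, 0 ≤ (charFun ν ξ).re) {τ : ℝ}
    (hτ : 0 < τ) :
    ∫⁻ ξ, ENNReal.ofReal ((charFun ν ξ).re * Real.exp (-τ * ‖ξ‖ ^ 2)) =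
      ∫⁻ x, ENNReal.ofReal (gaussianFT τ x) ∂ν := by
  have re_integrable := (integrable_charFun_mul_exp_neg_mul_sq_norm (ν := ν) hτ).re
  simp only [RCLike.re_eq_complex_re, Complex.re_mul_ofReal] at re_integrable
  rw [← ofReal_integral_eq_lintegral_ofReal re_integrable
      (.of_forall fun ξ ↦ mul_nonneg (hν ξ) (Real.exp_nonneg _)),
    integral_re_charFun_mul_exp_neg_mul_sq_norm hτ,
    ofReal_integral_eq_lintegral_ofReal (integrable_gaussianFT hτ.le)
      (.of_forall (gaussianFT_nonneg hτ.le))]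

lemma ofReal_Gamma_mul_lintegral_re_charFun_mul_rpow (hν : ∀ ξ, 0 ≤ (charFun ν ξ).re) {s : ℝ}
    (hs : 0 < s) (hsE : s < Module.finrank ℝ E) :
    ENNReal.ofReal (Real.Gamma ((Module.finrank ℝ E - s) / 2)) *
        ∫⁻ ξ, ENNReal.ofReal ((charFun ν ξ).re * ‖ξ‖ ^ (s - Module.finrank ℝ E)) =
      ∫⁻ τ in Ioi (0 : ℝ), ENNReal.ofReal (τ ^ ((Module.finrank ℝ E - s) / 2 - 1)) *
        ∫⁻ z, ENNReal.ofReal (gaussianFT τ z) ∂ν := by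
  set n := Module.finrank ℝ E
  have : Nontrivial E := Module.nontrivial_of_finrank_pos (R := ℝ) (mod_cast hs.trans hsE)
  have : Continuous fun ξ ↦ (charFun ν ξ).re :=
    Complex.continuous_re.comp continuous_charFun
  calc _ = ∫⁻ ξ, ∫⁻ τ in Ioi (0 : ℝ), ENNReal.ofReal (τ ^ ((n - s) / 2 - 1)) *
          ENNReal.ofReal ((charFun ν ξ).re * Real.exp (-τ * ‖ξ‖ ^ 2)) := by
        rw [← lintegral_const_mul _ (by fun_prop)]
        refine lintegral_congr_ae ?_
        filter_upwards [(volume : Measure E).ae_ne 0] with ξ hξ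
        rw [← ofReal_Gamma_mul_rpow_eq_lintegral (by linarith) (hν ξ) (norm_pos_iff.2 hξ)]
        ring_nf
    _ = _ := by
        rw [lintegral_lintegral_swap (by fun_prop)]
        refine setLIntegral_congr_fun measurableSet_Ioi fun τ hτ ↦ ?_
        rw [lintegral_const_mul _ (by fun_prop),
          lintegral_re_charFun_mul_exp_neg_mul_sq_norm hν hτ]

lemma lintegral_rpow_mul_lintegral_gaussianFT_le {s : ℝ} (hs : 0 < s) :
    ∫⁻ τ in Ioi (0 : ℝ), ENNReal.ofReal (τ ^ (((Module.finrank ℝ E : ℝ) - s) / 2 - 1)) *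
        ∫⁻ z, ENNReal.ofReal (gaussianFT τ z) ∂ν ≤
      ENNReal.ofReal (Real.pi ^ ((Module.finrank ℝ E : ℝ) / 2) * 2 ^ s * Real.Gamma (s / 2)) *
        ∫⁻ z : E, ‖z‖ₑ ^ (-s) ∂ν := by
  have gaussianFT_measurable : Measurable fun p : ℝ × E ↦ ENNReal.ofReal (gaussianFT p.1 p.2) := by
    unfold gaussianFT
    fun_prop
  have rpow_measurable : Measurable fun p : ℝ × E ↦
      ENNReal.ofReal (p.1 ^ (((Module.finrank ℝ E : ℝ) - s) / 2 - 1)) := by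
    fun_prop
  simp_rw [← lintegral_const_mul _ (continuous_gaussianFT _).measurable.ennreal_ofReal]
  rw [lintegral_lintegral_swap (rpow_measurable.mul gaussianFT_measurable).aemeasurable,
    ← lintegral_const_mul _ (by fun_prop)]
  exact lintegral_mono (lintegral_rpow_mul_gaussianFT_le hs)

/-- The constant in the Fourier representation
`∫ |μ̂(ξ)|² |ξ| ^ (s - d) dξ = rieszConst d s * I_μ(s)` of the `s`-energy on `ℝ^d`. -/
def rieszConst (d : ℕ) (s : ℝ) : ℝ :=
  Real.pi ^ ((d : ℝ) / 2) * 2 ^ s * (Real.Gamma (s / 2) / Real.Gamma (((d : ℝ) - s) / 2))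

lemma lintegral_re_charFun_mul_rpow_le (hν : ∀ ξ, 0 ≤ (charFun ν ξ).re) {s : ℝ} (hs : 0 < s)
    (hsE : s < Module.finrank ℝ E) :
    ∫⁻ ξ, ENNReal.ofReal ((charFun ν ξ).re * ‖ξ‖ ^ (s - Module.finrank ℝ E)) ≤
      ENNReal.ofReal (rieszConst (Module.finrank ℝ E) s) * ∫⁻ z, ‖z‖ₑ ^ (-s) ∂ν := by
  have Gamma_pos : 0 < Real.Gamma ((Module.finrank ℝ E - s) / 2) :=
    Real.Gamma_pos_of_pos (by linarith)
  have Gamma_mul_le := (ofReal_Gamma_mul_lintegral_re_charFun_mul_rpow hν hs hsE).trans_le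
    (lintegral_rpow_mul_lintegral_gaussianFT_le hs)
  rw [mul_comm, ← ENNReal.le_div_iff_mul_le (by simp [Gamma_pos]) (by simp)] at Gamma_mul_le
  refine Gamma_mul_le.trans_eq ?_
  rw [rieszConst, ← mul_div_assoc, ENNReal.ofReal_div_of_pos Gamma_pos, ENNReal.mul_div_right_comm]

end RieszEnergy

section DifferenceMeasure

variable {E : Type*} [NormedAddCommGroup E] [InnerProductSpace ℝ E] [MeasurableSpace E]

/-- The law of `x - y` for independent `x, y` distributed according to `μ`; its characteristic
function is `|μ̂|²`. -/
def differenceMeasure (μ : Measure E) : Measure E := (μ.prod μ).map fun p ↦ p.1 - p.2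

variable [BorelSpace E] [FiniteDimensional ℝ E]

instance isFiniteMeasure_differenceMeasure (μ : Measure E) [IsFiniteMeasure μ] :
    IsFiniteMeasure (differenceMeasure μ) :=
  Measure.isFiniteMeasure_map _ _

lemma charFun_differenceMeasure (μ : Measure E) [SFinite μ] (ξ : E) :
    charFun (differenceMeasure μ) ξ = ((‖charFun μ ξ‖ ^ 2 : ℝ) : ℂ) := by
  have exp_inner_sub (p : E × E) : Complex.exp (inner ℝ (p.1 - p.2) ξ * Complex.I) =
      Complex.exp (inner ℝ p.1 ξ * Complex.I) * Complex.exp (inner ℝ p.2 (-ξ) * Complex.I) := by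
    rw [← Complex.exp_add, inner_sub_left, inner_neg_right]
    push_cast
    ring_nf
  rw [charFun_apply, differenceMeasure, integral_map (by fun_prop) (by fun_prop)]
  simp only [exp_inner_sub]
  rw [integral_prod_mul (fun x ↦ Complex.exp (inner ℝ x ξ * Complex.I))
      fun y ↦ Complex.exp (inner ℝ y (-ξ) * Complex.I), ← charFun_apply, ← charFun_apply,
    charFun_neg, Complex.mul_conj, Complex.normSq_eq_norm_sq]

lemma lintegral_differenceMeasure (μ : Measure E) [SFinite μ] {f : E → ℝ≥0∞} (hf : Measurable f) :
    ∫⁻ z, f z ∂differenceMeasure μ = ∫⁻ x, ∫⁻ y, f (x - y) ∂μ ∂μ := by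
  rw [differenceMeasure, lintegral_map hf (by fun_prop), lintegral_prod _ (by fun_prop)]

end DifferenceMeasure

section Energy

variable {d : ℕ}

lemma energy_eq_lintegral_differenceMeasure (μ : Measure (Euc d)) [SFinite μ] (s : ℝ) :
    energy μ s = ∫⁻ z, ‖z‖ₑ ^ (-s) ∂differenceMeasure μ := by
  rw [lintegral_differenceMeasure μ (by fun_prop), energy]
  simp only [edist_eq_enorm_sub]

lemma lintegral_norm_fourierM_sq_mul_rpow_le_energy (μ : Measure (Euc d)) [IsFiniteMeasure μ]
    {s : ℝ} (hs : 0 < s) (hsd : s < d) :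
    ∫⁻ ξ, ENNReal.ofReal (‖fourierM μ ξ‖ ^ 2 * ‖ξ‖ ^ (s - d)) ≤
      ENNReal.ofReal (rieszConst d s) * energy μ s := by
  have riesz := lintegral_re_charFun_mul_rpow_le (ν := differenceMeasure μ)
    (fun ξ ↦ by rw [charFun_differenceMeasure, Complex.ofReal_re]; positivity) hs
    (by rwa [finrank_euclideanSpace_fin])
  simpa only [charFun_differenceMeasure, Complex.ofReal_re, finrank_euclideanSpace_fin,
    ← norm_fourierM, ← energy_eq_lintegral_differenceMeasure] using riesz

end Energy

section LowFrequencies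

variable {E : Type*} [NormedAddCommGroup E] [InnerProductSpace ℝ E]

lemma norm_inner_sq_le_of_norm_le {R : ℝ} {x : E} (hx : ‖x‖ ≤ R) (ξ : E) :
    ‖(inner ℝ x ξ : ℝ) ^ 2‖ ≤ (R * ‖ξ‖) ^ 2 := by
  rw [norm_pow]
  gcongr
  exact (norm_inner_le_norm x ξ).trans (by gcongr)

variable [MeasurableSpace E] [BorelSpace E]

lemma one_sub_integral_inner_sq_le_norm_charFun_sq {ν : Measure E} [IsProbabilityMeasure ν] {ξ : E}
    (hξ : Integrable (fun x ↦ (inner ℝ x ξ : ℝ) ^ 2) ν) :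
    1 - ∫ x, (inner ℝ x ξ : ℝ) ^ 2 ∂ν ≤ ‖charFun ν ξ‖ ^ 2 := by
  have cos_integrable : Integrable (fun x ↦ Real.cos (inner ℝ x ξ)) ν :=
    .of_bound (by fun_prop) 1 (.of_forall fun x ↦ Real.abs_cos_le_one _)
  have re_ge : 1 - (∫ x, (inner ℝ x ξ : ℝ) ^ 2 ∂ν) / 2 ≤ (charFun ν ξ).re := by
    calc _ = ∫ x, (1 - (inner ℝ x ξ : ℝ) ^ 2 / 2) ∂ν := by
          rw [integral_sub (integrable_const _) (hξ.div_const 2), integral_div, integral_const,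
            probReal_univ, one_smul]
      _ ≤ ∫ x, Real.cos (inner ℝ x ξ) ∂ν :=
          integral_mono ((integrable_const _).sub (hξ.div_const 2)) cos_integrable
            fun x ↦ Real.one_sub_sq_div_two_le_cos
      _ = _ := (re_charFun_eq_integral_cos ν ξ).symm
  have re_sq_le : (charFun ν ξ).re ^ 2 ≤ ‖charFun ν ξ‖ ^ 2 :=
    sq_le_sq.2 ((Complex.abs_re_le_norm _).trans_eq (abs_norm _).symm)
  nlinarith [sq_nonneg ((charFun ν ξ).re - 1)]

variable [FiniteDimensional ℝ E]

lemma integrableOn_closedBall_of_continuous {f : E → ℝ} (hf : Continuous f) (r : ℝ) :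
    IntegrableOn f (closedBall 0 r) :=
  hf.continuousOn.integrableOn_compact (isCompact_closedBall 0 r)

lemma setIntegral_closedBall_inner_sq_eq_of_norm_eq {z w : E} (hzw : ‖z‖ = ‖w‖) (r : ℝ) :
    ∫ ξ in closedBall (0 : E) r, (inner ℝ z ξ : ℝ) ^ 2 =
      ∫ ξ in closedBall (0 : E) r, (inner ℝ w ξ : ℝ) ^ 2 := by
  set R := (ℝ ∙ (z - w))ᗮ.reflection
  have preimage_eq : R ⁻¹' closedBall 0 r = closedBall 0 r := by
    ext ξ
    simp only [mem_preimage, mem_closedBall_zero_iff, R.norm_map]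
  have R_preserving : MeasurePreserving R := R.measurePreserving
  rw [← R_preserving.setIntegral_preimage_emb R.toHomeomorph.measurableEmbedding
    (fun ξ ↦ (inner ℝ w ξ : ℝ) ^ 2), preimage_eq]
  have inner_reflection (ξ : E) : inner ℝ w (R ξ) = inner ℝ z ξ := by
    rw [← Submodule.reflection_sub hzw, R.inner_map_map]
  simp only [inner_reflection]

lemma finrank_mul_setIntegral_closedBall_inner_sq (z : E) (r : ℝ) :
    Module.finrank ℝ E * ∫ ξ in closedBall (0 : E) r, (inner ℝ z ξ : ℝ) ^ 2 =
      ‖z‖ ^ 2 * ∫ ξ in closedBall (0 : E) r, ‖ξ‖ ^ 2 := by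
  set e := stdOrthonormalBasis ℝ E
  have integral_basis (i) : ∫ ξ in closedBall (0 : E) r, (inner ℝ z ξ : ℝ) ^ 2 =
      ‖z‖ ^ 2 * ∫ ξ in closedBall (0 : E) r, (inner ℝ (e i) ξ : ℝ) ^ 2 := by
    rw [setIntegral_closedBall_inner_sq_eq_of_norm_eq (w := ‖z‖ • e i) (by simp [norm_smul]) r,
      ← integral_const_mul]
    simp only [real_inner_smul_left, mul_pow]
  calc _ = ∑ _ : Fin (Module.finrank ℝ E),
          ∫ ξ in closedBall (0 : E) r, (inner ℝ z ξ : ℝ) ^ 2 := by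
        simp
    _ = ‖z‖ ^ 2 * ∑ i, ∫ ξ in closedBall (0 : E) r, (inner ℝ (e i) ξ : ℝ) ^ 2 := by
        rw [Finset.mul_sum]
        exact Finset.sum_congr rfl fun i _ ↦ integral_basis i
    _ = _ := by
        rw [← integral_finsetSum _ fun i _ ↦ integrableOn_closedBall_of_continuous (by fun_prop) r]
        simp only [← Real.norm_eq_abs, ← sq_abs (inner ℝ _ _), e.sum_sq_norm_inner_right]

lemma setIntegral_unitBall_inner_sq_le [Nontrivial E] (z : E) :
    ∫ ξ in closedBall (0 : E) 1, (inner ℝ z ξ : ℝ) ^ 2 ≤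
      ‖z‖ ^ 2 / Module.finrank ℝ E * volume.real (closedBall (0 : E) 1) := by
  have finrank_pos : (0 : ℝ) < Module.finrank ℝ E := mod_cast Module.finrank_pos
  have norm_sq_le : ∫ ξ in closedBall (0 : E) 1, ‖ξ‖ ^ 2 ≤ volume.real (closedBall (0 : E) 1) := by
    rw [← setIntegral_one_eq_measureReal]
    exact setIntegral_mono_on (integrableOn_closedBall_of_continuous (by fun_prop) 1)
      (integrableOn_closedBall_of_continuous (by fun_prop) 1) measurableSet_closedBall
      fun ξ hξ ↦ pow_le_one₀ (norm_nonneg ξ) (mem_closedBall_zero_iff.1 hξ)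
  rw [div_mul_eq_mul_div, le_div_iff₀ finrank_pos, mul_comm,
    finrank_mul_setIntegral_closedBall_inner_sq]
  gcongr

variable {ν : Measure E} {R : ℝ}

lemma integrable_inner_sq_prod_restrict_closedBall [IsFiniteMeasure ν]
    (hν : ∀ᵐ x ∂ν, ‖x‖ ≤ R) (r : ℝ) :
    Integrable (fun p : E × E ↦ (inner ℝ p.1 p.2 : ℝ) ^ 2)
      (ν.prod (volume.restrict (closedBall 0 r))) := by
  have : IsFiniteMeasure ((volume : Measure E).restrict (closedBall 0 r)) :=
    ⟨by simpa using measure_closedBall_lt_top⟩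
  refine .of_bound (by fun_prop) ((R * r) ^ 2) ?_
  filter_upwards [Measure.quasiMeasurePreserving_fst.ae hν,
    Measure.quasiMeasurePreserving_snd.ae (ae_restrict_mem measurableSet_closedBall)] with p hx hξ
  have : 0 ≤ R := (norm_nonneg _).trans hx
  refine (norm_inner_sq_le_of_norm_le hx p.2).trans ?_
  gcongr
  exact mem_closedBall_zero_iff.1 hξ

variable [IsProbabilityMeasure ν] [Nontrivial E]

lemma setIntegral_unitBall_integral_inner_sq_le (hν : ∀ᵐ x ∂ν, ‖x‖ ≤ R) :
    ∫ ξ in closedBall (0 : E) 1, ∫ x, (inner ℝ x ξ : ℝ) ^ 2 ∂ν ≤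
      R ^ 2 / Module.finrank ℝ E * volume.real (closedBall (0 : E) 1) := by
  have prod_integrable := integrable_inner_sq_prod_restrict_closedBall hν 1
  have moment_le : ∀ᵐ x ∂ν, ∫ ξ in closedBall (0 : E) 1, (inner ℝ x ξ : ℝ) ^ 2 ≤
      R ^ 2 / Module.finrank ℝ E * volume.real (closedBall (0 : E) 1) := by
    filter_upwards [hν] with x hx
    refine (setIntegral_unitBall_inner_sq_le x).trans ?_
    gcongr
  rw [← integral_integral_swap prod_integrable]
  refine (integral_mono_ae prod_integrable.integral_prod_left (integrable_const _)
    moment_le).trans_eq ?_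
  rw [integral_const, probReal_univ, one_smul]

lemma one_sub_mul_volume_le_setIntegral_norm_charFun_sq (hν : ∀ᵐ x ∂ν, ‖x‖ ≤ R) :
    (1 - R ^ 2 / Module.finrank ℝ E) * volume.real (closedBall (0 : E) 1) ≤
      ∫ ξ in closedBall (0 : E) 1, ‖charFun ν ξ‖ ^ 2 := by
  set B := closedBall (0 : E) 1
  have one_integrable : IntegrableOn (fun _ ↦ (1 : ℝ)) B :=
    integrableOn_closedBall_of_continuous continuous_const 1
  have moment_integrable : IntegrableOn (fun ξ ↦ ∫ x, (inner ℝ x ξ : ℝ) ^ 2 ∂ν) B :=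
    (integrable_inner_sq_prod_restrict_closedBall hν 1).integral_prod_right
  have inner_sq_integrable (ξ : E) : Integrable (fun x ↦ (inner ℝ x ξ : ℝ) ^ 2) ν :=
    .of_bound (by fun_prop) _ (hν.mono fun x hx ↦ norm_inner_sq_le_of_norm_le hx ξ)
  calc _ ≤ volume.real B - ∫ ξ in B, ∫ x, (inner ℝ x ξ : ℝ) ^ 2 ∂ν := by
        linarith [setIntegral_unitBall_integral_inner_sq_le hν]
    _ = ∫ ξ in B, (1 - ∫ x, (inner ℝ x ξ : ℝ) ^ 2 ∂ν) := by
        rw [integral_sub one_integrable moment_integrable, setIntegral_one_eq_measureReal]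
    _ ≤ _ := integral_mono (one_integrable.sub moment_integrable)
        (integrableOn_closedBall_of_continuous (continuous_charFun.norm.pow 2) 1)
        fun ξ ↦ one_sub_integral_inner_sq_le_norm_charFun_sq (inner_sq_integrable ξ)

end LowFrequencies

section UnitCube

variable {d : ℕ}

/-- The centre `(1/2, …, 1/2)` of the unit cube. -/
def cubeCenter (d : ℕ) : Euc d := WithLp.toLp 2 fun _ ↦ 1 / 2

lemma norm_sub_cubeCenter_le {x : Euc d} (hx : x ∈ unitCube d) :
    ‖x - cubeCenter d‖ ≤ √(d / 4) := by
  refine Real.le_sqrt_of_sq_le ?_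
  rw [EuclideanSpace.real_norm_sq_eq]
  calc ∑ i, (x - cubeCenter d) i ^ 2 ≤ ∑ _ : Fin d, (1 / 4 : ℝ) := by
        refine Finset.sum_le_sum fun i _ ↦ ?_
        obtain ⟨x_nonneg, x_le_one⟩ := hx i
        simp only [cubeCenter, PiLp.sub_apply]
        nlinarith
    _ = d / 4 := by simp [div_eq_mul_inv]

lemma FmuInt_eq_setIntegral_closedBall (μ : Measure (Euc d)) (T : ℝ) :
    FmuInt μ T = ∫ ξ in closedBall 0 T, ‖fourierM μ ξ‖ ^ 2 := by
  simp only [FmuInt, closedBall, dist_zero_right]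

lemma three_quarters_mul_volume_le_FmuInt_one (hd : d ≠ 0) {μ : Measure (Euc d)}
    [IsProbabilityMeasure μ] (hμ : ∀ᵐ x ∂μ, x ∈ unitCube d) :
    3 / 4 * volume.real (ball (0 : Euc d) 1) ≤ FmuInt μ 1 := by
  have : NeZero d := ⟨hd⟩
  set ν := μ.map (· + -cubeCenter d)
  have : IsProbabilityMeasure ν := Measure.isProbabilityMeasure_map (by fun_prop)
  have ν_bounded : ∀ᵐ x ∂ν, ‖x‖ ≤ √(d / 4) := by
    rw [ae_map_iff (by fun_prop) (measurableSet_le (by fun_prop) (by fun_prop))]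
    filter_upwards [hμ] with x hx
    simpa only [← sub_eq_add_neg] using norm_sub_cubeCenter_le hx
  have norm_charFun_eq (ξ : Euc d) : ‖charFun ν ξ‖ = ‖fourierM μ ξ‖ := by
    rw [charFun_map_add_const, norm_mul, Complex.norm_exp_ofReal_mul_I, mul_one, norm_fourierM]
  have mass := one_sub_mul_volume_le_setIntegral_norm_charFun_sq ν_bounded
  simp only [norm_charFun_eq, finrank_euclideanSpace_fin,
    ← FmuInt_eq_setIntegral_closedBall] at mass
  rw [Real.sq_sqrt (by positivity), show (d : ℝ) / 4 / d = 1 / 4 by field_simp,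
    measureReal_def, Measure.addHaar_unitClosedBall_eq_addHaar_unitBall,
    ← measureReal_def] at mass
  linarith

end UnitCube

section Constants

lemma Gamma_add_le_rpow_mul_Gamma {p θ : ℝ} (hp : 0 < p) (hθ : 0 < θ) (hθ1 : θ < 1) :
    Real.Gamma (p + θ) ≤ p ^ θ * Real.Gamma p := by
  have Gamma_pos := Real.Gamma_pos_of_pos hp
  calc Real.Gamma (p + θ) = Real.Gamma (θ * (p + 1) + (1 - θ) * p) := by ring_nf
    _ ≤ Real.Gamma (p + 1) ^ θ * Real.Gamma p ^ (1 - θ) :=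
        Real.Gamma_mul_add_mul_le_rpow_Gamma_mul_rpow_Gamma (by linarith) hp hθ (by linarith)
          (by ring)
    _ = p ^ θ * Real.Gamma p := by
        rw [Real.Gamma_add_one hp.ne', Real.mul_rpow hp.le Gamma_pos.le, mul_assoc,
          ← Real.rpow_add Gamma_pos, add_sub_cancel, Real.rpow_one]

lemma mul_pi_rpow_half_le {x : ℝ} (hx : 0 ≤ x) : x * Real.pi ^ (x / 2) ≤ 5 * 2 ^ x := by
  have linear_le_exp : x ≤ 5 * Real.exp (x / 10) := by
    have exp_one_ge := Real.add_one_le_exp 1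
    have tangent := Real.add_one_le_exp (x / 10 - 1)
    rw [Real.exp_sub, sub_add_cancel, le_div_iff₀ (Real.exp_pos 1)] at tangent
    nlinarith
  have pi_le : Real.pi ≤ 4 * Real.exp (-(1 / 5)) := by
    linarith [Real.pi_lt_d2, Real.add_one_le_exp (-(1 / 5))]
  calc x * Real.pi ^ (x / 2) ≤ 5 * Real.exp (x / 10) * (4 * Real.exp (-(1 / 5))) ^ (x / 2) := by
        have := Real.pi_pos
        gcongr
    _ = 5 * 2 ^ x := by
        rw [Real.mul_rpow (by norm_num) (Real.exp_nonneg _), ← Real.exp_mul,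
          show (4 : ℝ) = 2 ^ (2 : ℝ) by norm_num, ← Real.rpow_mul two_pos.le,
          mul_div_cancel₀ x two_ne_zero, mul_mul_mul_comm, ← Real.exp_add,
          show x / 10 + -(1 / 5) * (x / 2) = 0 by ring, Real.exp_zero, mul_one]

variable {d : ℕ}

lemma decayConst_nonneg (hd : d ≠ 0) : 0 ≤ decayConst d := by
  have : (1 : ℝ) ≤ d := mod_cast Nat.one_le_iff_ne_zero.2 hd
  have : 0 ≤ ((d : ℝ) - 1) / 2 := by linarith
  unfold decayConst
  positivity

lemma decayConst_le (hd : d ≠ 0) : decayConst d ≤ 2 * ((d : ℝ) / 2) ^ ((d : ℝ) / 2) := by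
  have d_ge : (1 : ℝ) ≤ d := mod_cast Nat.one_le_iff_ne_zero.2 hd
  calc decayConst d ≤ √(2 * d) * ((d : ℝ) / 2) ^ (((d : ℝ) - 1) / 2) := by
        unfold decayConst
        gcongr
        all_goals linarith
    _ = 2 * (((d : ℝ) / 2) ^ (1 / 2 : ℝ) * ((d : ℝ) / 2) ^ (((d : ℝ) - 1) / 2)) := by
        rw [← Real.sqrt_eq_rpow, ← mul_assoc, show 2 * (d : ℝ) = 2 ^ 2 * (d / 2) by ring,
          Real.sqrt_mul (by positivity), Real.sqrt_sq two_pos.le]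
    _ = 2 * ((d : ℝ) / 2) ^ ((d : ℝ) / 2) := by
        rw [← Real.rpow_add (by positivity)]
        ring_nf

lemma rieszConst_nonneg {s : ℝ} (hs : 0 < s) (hsd : s < d) : 0 ≤ rieszConst d s := by
  have := Real.Gamma_pos_of_pos (half_pos hs)
  have := Real.Gamma_pos_of_pos (half_pos (sub_pos.2 hsd))
  have := Real.pi_pos
  unfold rieszConst
  positivity

variable {α : ℝ}

lemma rieszConst_le (hd : 2 ≤ d) (hα : 0 < α) (hα8 : α ≤ 1 / 8) :
    rieszConst d (((d : ℝ) + 1) / 2 + α) ≤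
      Real.pi ^ ((d : ℝ) / 2) * (2 * 2 ^ ((d : ℝ) / 2)) * (d / 2) := by
  have d_ge : (2 : ℝ) ≤ d := mod_cast hd
  have := Real.pi_pos
  set s := ((d : ℝ) + 1) / 2 + α with s_eq
  set p := ((d : ℝ) - s) / 2 with p_eq
  have p_pos : 0 < p := by linarith
  have two_rpow_le : (2 : ℝ) ^ s ≤ 2 * 2 ^ ((d : ℝ) / 2) := by
    rw [← Real.rpow_one_add' two_pos.le (by positivity)]
    exact Real.rpow_le_rpow_of_exponent_le one_le_two (by linarith)
  have p_rpow_le : p ^ (1 / 2 + α) ≤ d / 2 := by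
    calc p ^ (1 / 2 + α) ≤ ((d : ℝ) / 2) ^ (1 / 2 + α) := by
          gcongr
          linarith
      _ ≤ ((d : ℝ) / 2) ^ (1 : ℝ) :=
          Real.rpow_le_rpow_of_exponent_le (by linarith) (by linarith)
      _ = d / 2 := Real.rpow_one _
  have Gamma_ratio_le : Real.Gamma (s / 2) / Real.Gamma p ≤ d / 2 := by
    rw [div_le_iff₀ (Real.Gamma_pos_of_pos p_pos), show s / 2 = p + (1 / 2 + α) by linarith]
    exact (Gamma_add_le_rpow_mul_Gamma p_pos (by linarith) (by linarith)).trans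
      (mul_le_mul_of_nonneg_right p_rpow_le (Real.Gamma_pos_of_pos p_pos).le)
  unfold rieszConst
  gcongr

lemma decayConst_mul_rieszConst_le (hd : 2 ≤ d) (hα : 0 < α) (hα8 : α ≤ 1 / 8) :
    decayConst d * rieszConst d (((d : ℝ) + 1) / 2 + α) ≤ 10 * 2 ^ d * (d : ℝ) ^ ((d : ℝ) / 2) := by
  have d_ge : (2 : ℝ) ≤ d := mod_cast hd
  calc _ ≤ (2 * ((d : ℝ) / 2) ^ ((d : ℝ) / 2)) *
          (Real.pi ^ ((d : ℝ) / 2) * (2 * 2 ^ ((d : ℝ) / 2)) * (d / 2)) :=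
        mul_le_mul (decayConst_le (by lia)) (rieszConst_le hd hα hα8)
          (rieszConst_nonneg (by linarith) (by linarith)) (by positivity)
    _ = 2 * (d * Real.pi ^ ((d : ℝ) / 2)) * ((d : ℝ) / 2 * 2) ^ ((d : ℝ) / 2) := by
        rw [Real.mul_rpow (by positivity) two_pos.le]
        ring
    _ ≤ 2 * (5 * 2 ^ (d : ℝ)) * ((d : ℝ) / 2 * 2) ^ ((d : ℝ) / 2) := by
        have := mul_pi_rpow_half_le (Nat.cast_nonneg d)
        gcongr
    _ = _ := by
        rw [div_mul_cancel₀ _ two_ne_zero, Real.rpow_natCast]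
        ring

lemma decayConst_mul_rieszConst_add_two_le (hd : 2 ≤ d) (hα : 0 < α) (hα8 : α ≤ 1 / 8) :
    decayConst d * rieszConst d (((d : ℝ) + 1) / 2 + α) + 2 ≤
      31 / 32 * (3 / 4) * (2 ^ (d + 4) * (d : ℝ) ^ ((d : ℝ) / 2)) := by
  have d_ge : (2 : ℝ) ≤ d := mod_cast hd
  have two_pow_ge : (2 : ℝ) ^ 2 ≤ 2 ^ d := pow_le_pow_right₀ one_le_two hd
  have d_rpow_ge : (2 : ℝ) ≤ (d : ℝ) ^ ((d : ℝ) / 2) :=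
    d_ge.trans (Real.self_le_rpow_of_one_le (by linarith) (by linarith))
  have product_ge := mul_le_mul two_pow_ge d_rpow_ge two_pos.le (by positivity)
  rw [pow_add]
  linarith [decayConst_mul_rieszConst_le hd hα hα8]

end Constants

section SphericalIntegral

variable {d : ℕ} {μ : Measure (Euc d)}

/-- The integrand of `∫ |μ̂(ξ)|² σ̂(tξ) dξ`, the density at `t` of the distribution of distances
between `μ`-random points up to a power of `t`. -/
def sphericalIntegrand (μ : Measure (Euc d)) (t : ℝ) (ξ : Euc d) : ℝ :=
  ‖fourierM μ ξ‖ ^ 2 * (sphereFT d (t • ξ)).re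

/-- The density whose integral represents the `s`-energy of `μ` up to the factor
`rieszConst d s`. -/
def rieszDensity (μ : Measure (Euc d)) (s : ℝ) (ξ : Euc d) : ℝ :=
  ‖fourierM μ ξ‖ ^ 2 * ‖ξ‖ ^ (s - d)

lemma rieszDensity_nonneg (μ : Measure (Euc d)) (s : ℝ) (ξ : Euc d) : 0 ≤ rieszDensity μ s ξ :=
  mul_nonneg (sq_nonneg _) (Real.rpow_nonneg (norm_nonneg _) _)

variable {t M α : ℝ}

lemma abs_sphericalIntegrand_le_mul_rieszDensity (hd : 2 ≤ d) (ht : 0 < t) (hM : 0 < M)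
    (hα : 0 ≤ α) (htM : ((d : ℝ) - 1) / 2 ≤ t * M) {ξ : Euc d} (hξ : M ≤ ‖ξ‖) :
    |sphericalIntegrand μ t ξ| ≤ decayConst d * (t ^ (-(((d : ℝ) - 1) / 2)) * M ^ (-α)) *
      rieszDensity μ (((d : ℝ) + 1) / 2 + α) ξ := by
  have ξ_pos : 0 < ‖ξ‖ := hM.trans_le hξ
  have norm_eq : ‖t • ξ‖ = t * ‖ξ‖ := by rw [norm_smul, Real.norm_of_nonneg ht.le]
  have decay : |(sphereFT d (t • ξ)).re| ≤ decayConst d * (t * ‖ξ‖) ^ (-(((d : ℝ) - 1) / 2)) := by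
    rw [← norm_eq]
    refine abs_re_sphereFT_le hd (htM.trans ?_)
    rw [norm_eq]
    gcongr
  have rpow_split : (t * ‖ξ‖) ^ (-(((d : ℝ) - 1) / 2)) = t ^ (-(((d : ℝ) - 1) / 2)) *
      (‖ξ‖ ^ (-α) * ‖ξ‖ ^ (((d : ℝ) + 1) / 2 + α - d)) := by
    rw [Real.mul_rpow ht.le ξ_pos.le, ← Real.rpow_add ξ_pos]
    ring_nf
  have decay_nonneg := decayConst_nonneg (d := d) (by lia)
  rw [sphericalIntegrand, rieszDensity, abs_mul, abs_of_nonneg (sq_nonneg _)]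
  calc _ ≤ ‖fourierM μ ξ‖ ^ 2 * (decayConst d * (t ^ (-(((d : ℝ) - 1) / 2)) *
          (M ^ (-α) * ‖ξ‖ ^ (((d : ℝ) + 1) / 2 + α - d)))) := by
        gcongr
        refine decay.trans ?_
        rw [rpow_split]
        gcongr ?_ * (?_ * (?_ * _))
        exact Real.rpow_le_rpow_of_nonpos hM hξ (neg_nonpos.2 hα)
    _ = _ := by ring

lemma norm_sphericalIntegrand_ae_le_mul_rieszDensity (hd : 2 ≤ d) (ht : 0 < t) (hM : 0 < M)
    (hα : 0 ≤ α) (htM : ((d : ℝ) - 1) / 2 ≤ t * M) :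
    ∀ᵐ ξ ∂volume.restrict (closedBall 0 M)ᶜ, ‖sphericalIntegrand μ t ξ‖ ≤
      decayConst d * (t ^ (-(((d : ℝ) - 1) / 2)) * M ^ (-α)) *
        rieszDensity μ (((d : ℝ) + 1) / 2 + α) ξ := by
  filter_upwards [ae_restrict_mem measurableSet_closedBall.compl] with ξ hξ
  rw [mem_compl_iff, mem_closedBall_zero_iff, not_le] at hξ
  exact abs_sphericalIntegrand_le_mul_rieszDensity hd ht hM hα htM hξ.le

variable [IsFiniteMeasure μ]

lemma measurable_rieszDensity (μ : Measure (Euc d)) [IsFiniteMeasure μ] (s : ℝ) :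
    Measurable (rieszDensity μ s) :=
  (continuous_norm_fourierM_sq μ).measurable.mul (by fun_prop)

lemma integrable_rieszDensity {s : ℝ} (hs : 0 < s) (hsd : s < d) (henergy : energy μ s ≠ ∞) :
    Integrable (rieszDensity μ s) := by
  refine ⟨(measurable_rieszDensity μ s).aestronglyMeasurable, ?_⟩
  rw [hasFiniteIntegral_iff_ofReal (.of_forall (rieszDensity_nonneg μ s))]
  exact (lintegral_norm_fourierM_sq_mul_rpow_le_energy μ hs hsd).trans_lt
    (ENNReal.mul_lt_top ENNReal.ofReal_lt_top henergy.lt_top)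

lemma integral_rieszDensity_le {s C : ℝ} (hs : 0 < s) (hsd : s < d) (hC : 0 ≤ C)
    (henergy : energy μ s ≤ ENNReal.ofReal C) : ∫ ξ, rieszDensity μ s ξ ≤ rieszConst d s * C := by
  have riesz_nonneg := rieszConst_nonneg hs hsd
  rw [integral_eq_lintegral_of_nonneg_ae (.of_forall (rieszDensity_nonneg μ s))
    (measurable_rieszDensity μ s).aestronglyMeasurable]
  refine ENNReal.toReal_le_of_le_ofReal (mul_nonneg riesz_nonneg hC) ?_
  rw [ENNReal.ofReal_mul riesz_nonneg]
  exact (lintegral_norm_fourierM_sq_mul_rpow_le_energy μ hs hsd).trans (by gcongr)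

lemma integrableOn_norm_fourierM_sq_closedBall (μ : Measure (Euc d)) [IsFiniteMeasure μ] (T : ℝ) :
    IntegrableOn (fun ξ ↦ ‖fourierM μ ξ‖ ^ 2) (closedBall 0 T) :=
  integrableOn_closedBall_of_continuous (continuous_norm_fourierM_sq μ) T

lemma FmuInt_mono (μ : Measure (Euc d)) [IsFiniteMeasure μ] : Monotone (FmuInt μ) := by
  intro T M hTM
  simp only [FmuInt_eq_setIntegral_closedBall]
  exact setIntegral_mono_set (integrableOn_norm_fourierM_sq_closedBall μ M)
    (.of_forall fun ξ ↦ sq_nonneg _) (closedBall_subset_closedBall hTM).eventuallyLE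

lemma continuous_sphericalIntegrand (hd : d ≠ 0) (t : ℝ) : Continuous (sphericalIntegrand μ t) :=
  (continuous_norm_fourierM_sq μ).mul ((continuous_re_sphereFT hd).comp (continuous_const_smul t))

lemma integrableOn_sphericalIntegrand_closedBall (hd : d ≠ 0) (t T : ℝ) :
    IntegrableOn (sphericalIntegrand μ t) (closedBall 0 T) :=
  integrableOn_closedBall_of_continuous (continuous_sphericalIntegrand hd t) T

lemma mul_FmuInt_le_setIntegral_sphericalIntegrand (hd : d ≠ 0) {t : ℝ} (ht : 0 ≤ t) (T : ℝ) :
    (1 - (t * T) ^ 2 / 2) * FmuInt μ T ≤ ∫ ξ in closedBall 0 T, sphericalIntegrand μ t ξ := by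
  rw [FmuInt_eq_setIntegral_closedBall, ← integral_const_mul]
  refine setIntegral_mono_on ((integrableOn_norm_fourierM_sq_closedBall μ T).const_mul _)
    (integrableOn_sphericalIntegrand_closedBall hd t T) measurableSet_closedBall fun ξ hξ ↦ ?_
  have norm_le : ‖t • ξ‖ ≤ t * T := by
    rw [norm_smul, Real.norm_of_nonneg ht]
    gcongr
    exact mem_closedBall_zero_iff.1 hξ
  rw [mul_comm, sphericalIntegrand]
  gcongr
  refine le_trans ?_ (one_sub_norm_sq_div_two_le_re_sphereFT hd (t • ξ))
  gcongr

lemma FmuInt_sub_le_setIntegral_sphericalIntegrand (hd : d ≠ 0) (t : ℝ) {T M : ℝ} (hTM : T ≤ M) :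
    FmuInt μ T - FmuInt μ M ≤
      ∫ ξ in closedBall 0 M \ closedBall 0 T, sphericalIntegrand μ t ξ := by
  have fourier_integrable := integrableOn_norm_fourierM_sq_closedBall μ M
  calc FmuInt μ T - FmuInt μ M
      = ∫ ξ in closedBall 0 M \ closedBall 0 T, -‖fourierM μ ξ‖ ^ 2 := by
        rw [integral_neg, setIntegral_sdiff measurableSet_closedBall fourier_integrable
          (closedBall_subset_closedBall hTM), FmuInt_eq_setIntegral_closedBall,
          FmuInt_eq_setIntegral_closedBall, neg_sub]
    _ ≤ _ := by
        refine setIntegral_mono (fourier_integrable.mono_set sdiff_subset).neg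
          ((integrableOn_sphericalIntegrand_closedBall hd t M).mono_set sdiff_subset) fun ξ ↦ ?_
        rw [neg_eq_neg_one_mul, mul_comm, sphericalIntegrand]
        gcongr
        exact (abs_le.1 (abs_re_sphereFT_le_one hd _)).1

lemma integrable_sphericalIntegrand (hd : 2 ≤ d) (ht : 0 < t) (hα : 0 ≤ α)
    (hαd : α < ((d : ℝ) - 1) / 2) (henergy : energy μ (((d : ℝ) + 1) / 2 + α) ≠ ∞) :
    Integrable (sphericalIntegrand μ t) := by
  have d_ne : d ≠ 0 := by lia
  set M := max 1 (((d : ℝ) - 1) / 2 / t)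
  have htM : ((d : ℝ) - 1) / 2 ≤ t * M := (div_le_iff₀' ht).1 (le_max_right _ _)
  have riesz_integrable := integrable_rieszDensity (by positivity) (by linarith) henergy
  rw [← integrableOn_univ, ← union_compl_self (closedBall 0 M)]
  exact (integrableOn_sphericalIntegrand_closedBall d_ne t M).union
    ((riesz_integrable.const_mul _).integrableOn.mono'
      (continuous_sphericalIntegrand d_ne t).aestronglyMeasurable
      (norm_sphericalIntegrand_ae_le_mul_rieszDensity hd ht (by positivity) hα htM))

lemma abs_setIntegral_compl_closedBall_sphericalIntegrand_le {C : ℝ} (hd : 2 ≤ d) (ht : 0 < t)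
    (hM : 0 < M) (hα : 0 ≤ α) (hαd : α < ((d : ℝ) - 1) / 2) (htM : ((d : ℝ) - 1) / 2 ≤ t * M)
    (hC : 0 ≤ C) (henergy : energy μ (((d : ℝ) + 1) / 2 + α) ≤ ENNReal.ofReal C) :
    |∫ ξ in (closedBall 0 M)ᶜ, sphericalIntegrand μ t ξ| ≤
      decayConst d * (t ^ (-(((d : ℝ) - 1) / 2)) * M ^ (-α)) *
        (rieszConst d (((d : ℝ) + 1) / 2 + α) * C) := by
  set s := ((d : ℝ) + 1) / 2 + α
  have s_lt : s < d := by simp only [s]; linarith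
  have decay_nonneg := decayConst_nonneg (d := d) (by lia)
  have riesz_integrable := integrable_rieszDensity (μ := μ) (s := s) (by positivity) s_lt
    (ne_top_of_le_ne_top ENNReal.ofReal_ne_top henergy)
  calc _ ≤ ∫ ξ in (closedBall 0 M)ᶜ, decayConst d * (t ^ (-(((d : ℝ) - 1) / 2)) * M ^ (-α)) *
          rieszDensity μ s ξ :=
        norm_integral_le_of_norm_le (riesz_integrable.const_mul _).integrableOn
          (norm_sphericalIntegrand_ae_le_mul_rieszDensity hd ht hM hα htM)
    _ ≤ decayConst d * (t ^ (-(((d : ℝ) - 1) / 2)) * M ^ (-α)) * ∫ ξ, rieszDensity μ s ξ := by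
        rw [integral_const_mul]
        gcongr
        · exact .of_forall (rieszDensity_nonneg μ s)
        · exact Measure.restrict_le_self
    _ ≤ _ := by
        gcongr
        exact integral_rieszDensity_le (by positivity) s_lt hC henergy

lemma integral_sphericalIntegrand_ge {C T : ℝ} (hd : 2 ≤ d) (ht : 0 < t) (hTM : T ≤ M)
    (hM : 0 < M) (hα : 0 ≤ α) (hαd : α < ((d : ℝ) - 1) / 2) (htM : ((d : ℝ) - 1) / 2 ≤ t * M)
    (hC : 0 ≤ C) (henergy : energy μ (((d : ℝ) + 1) / 2 + α) ≤ ENNReal.ofReal C) :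
    (1 - (t * T) ^ 2 / 2) * FmuInt μ T - (FmuInt μ M - FmuInt μ T) -
        decayConst d * (t ^ (-(((d : ℝ) - 1) / 2)) * M ^ (-α)) *
          (rieszConst d (((d : ℝ) + 1) / 2 + α) * C) ≤
      ∫ ξ, sphericalIntegrand μ t ξ := by
  have d_ne : d ≠ 0 := by lia
  have split_tail := integral_add_compl (measurableSet_closedBall (x := (0 : Euc d)) (ε := M))
    (integrable_sphericalIntegrand hd ht hα hαd (ne_top_of_le_ne_top ENNReal.ofReal_ne_top henergy))
  have split_middle := setIntegral_sdiff (measurableSet_closedBall (x := (0 : Euc d)) (ε := T))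
    (integrableOn_sphericalIntegrand_closedBall (μ := μ) d_ne t M)
    (closedBall_subset_closedBall hTM)
  have low := mul_FmuInt_le_setIntegral_sphericalIntegrand (μ := μ) d_ne ht.le T
  have middle := FmuInt_sub_le_setIntegral_sphericalIntegrand (μ := μ) d_ne t hTM
  have tail := (abs_le.1 (abs_setIntegral_compl_closedBall_sphericalIntegrand_le hd ht hM hα hαd htM
    hC henergy)).1
  linarith

end SphericalIntegral

section Parameters

variable {d : ℕ} {μ : Measure (Euc d)} [IsProbabilityMeasure μ]

lemma cdConst_pos (hd : d ≠ 0) : 0 < cdConst d := by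
  have : (0 : ℝ) < d := by exact_mod_cast Nat.pos_of_ne_zero hd
  have volume_pos : 0 < volume.real (ball (0 : Euc d) 1) :=
    ENNReal.toReal_pos (measure_ball_pos volume 0 one_pos).ne' measure_ball_lt_top.ne
  rw [cdConst, ← measureReal_def]
  positivity

lemma mul_cdConst_le_FmuInt (hd : d ≠ 0) (hcube : ∀ᵐ x ∂μ, x ∈ unitCube d) {T : ℝ} (hT : 1 ≤ T) :
    3 / 4 * (2 ^ (d + 4) * (d : ℝ) ^ ((d : ℝ) / 2)) * cdConst d ≤ FmuInt μ T := by
  have : (0 : ℝ) < d := by exact_mod_cast Nat.pos_of_ne_zero hd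
  calc _ = 3 / 4 * volume.real (ball (0 : Euc d) 1) := by
        rw [cdConst, ← measureReal_def, mul_assoc, mul_div_cancel₀ _ (by positivity)]
    _ ≤ FmuInt μ 1 := three_quarters_mul_volume_le_FmuInt_one hd hcube
    _ ≤ FmuInt μ T := FmuInt_mono μ hT

lemma cdConst_le_integral_sphericalIntegrand {C t T M α : ℝ} (hd : 2 ≤ d)
    (hcube : ∀ᵐ x ∂μ, x ∈ unitCube d) (ht : 0 < t) (hT : 1 ≤ T) (hTM : T ≤ M)
    (htT : t * T ≤ 1 / 4) (htM : ((d : ℝ) - 1) / 2 ≤ t * M) (hα : 0 < α) (hα8 : α ≤ 1 / 8)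
    (hC : 0 ≤ C) (henergy : energy μ (((d : ℝ) + 1) / 2 + α) ≤ ENNReal.ofReal C)
    (hgap : FmuInt μ M - FmuInt μ T ≤ cdConst d)
    (htail : C * (t ^ (-(((d : ℝ) - 1) / 2)) * M ^ (-α)) ≤ cdConst d) :
    cdConst d ≤ ∫ ξ, sphericalIntegrand μ t ξ := by
  have d_ne : d ≠ 0 := by lia
  have two_le : (2 : ℝ) ≤ d := by exact_mod_cast hd
  have M_pos : 0 < M := by linarith
  set s := ((d : ℝ) + 1) / 2 + α with s_def
  set K := (2 : ℝ) ^ (d + 4) * (d : ℝ) ^ ((d : ℝ) / 2)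
  have s_lt : s < d := by linarith
  have main := integral_sphericalIntegrand_ge hd ht hTM M_pos hα.le (by linarith) htM hC henergy
  have low : 3 / 4 * K * cdConst d ≤ FmuInt μ T := mul_cdConst_le_FmuInt d_ne hcube hT
  have constants : (decayConst d * rieszConst d s + 2) * cdConst d ≤
      31 / 32 * (3 / 4) * K * cdConst d :=
    mul_le_mul_of_nonneg_right (decayConst_mul_rieszConst_add_two_le hd hα hα8)
      (cdConst_pos d_ne).le
  have low_factor : 31 / 32 * FmuInt μ T ≤ (1 - (t * T) ^ 2 / 2) * FmuInt μ T := by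
    have FmuInt_nonneg : 0 ≤ FmuInt μ T := integral_nonneg fun ξ ↦ sq_nonneg _
    have : (t * T) ^ 2 ≤ (1 / 4) ^ 2 := by gcongr
    gcongr
    linarith
  have tail : decayConst d * rieszConst d s * (C * (t ^ (-(((d : ℝ) - 1) / 2)) * M ^ (-α))) ≤
      decayConst d * rieszConst d s * cdConst d :=
    mul_le_mul_of_nonneg_left htail
      (mul_nonneg (decayConst_nonneg d_ne) (rieszConst_nonneg (by positivity) s_lt))
  linarith

lemma half_le_mul_rpow_neg {a N : ℝ} (ha : 0 < a) (ha4 : a ≤ 1 / 4) (hN : 1 ≤ N) :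
    N / 2 ≤ a * a ^ (-N) := by
  calc N / 2 ≤ (1 + N * 3) / 4 := by linarith
    _ ≤ (1 + 3) ^ N / 4 := by
        gcongr
        exact one_add_mul_self_le_rpow_one_add (by norm_num) hN
    _ = (1 / 4) ^ (1 - N) := by
        rw [one_div, Real.inv_rpow (by norm_num), ← Real.rpow_neg (by norm_num), neg_sub,
          Real.rpow_sub_one (by norm_num)]
        norm_num
    _ ≤ a ^ (1 - N) := Real.rpow_le_rpow_of_nonpos ha ha4 (by linarith)
    _ = a * a ^ (-N) := by rw [sub_eq_add_neg, Real.rpow_add ha, Real.rpow_one]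

lemma rpow_neg_mul_rpow_neg_le {a b t k N α : ℝ} (ha : 0 < a) (hat : a ≤ t) (hab : a ≤ b)
    (hk : 0 ≤ k) (hkN : k ≤ N * α) : t ^ (-k) * (a ^ (-N)) ^ (-α) ≤ b ^ (N * α - k) := by
  calc t ^ (-k) * (a ^ (-N)) ^ (-α) ≤ a ^ (-k) * (a ^ (-N)) ^ (-α) := by
        gcongr ?_ * _
        exact Real.rpow_le_rpow_of_nonpos ha hat (neg_nonpos.2 hk)
    _ = a ^ (N * α - k) := by
        rw [← Real.rpow_mul ha.le, ← Real.rpow_add ha]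
        ring_nf
    _ ≤ b ^ (N * α - k) := Real.rpow_le_rpow ha.le hab (sub_nonneg.2 hkN)

lemma div_le_rpow_neg {a b δ N : ℝ} (ha : 0 < a) (ha1 : a ≤ 1) (hab : a ≤ b) (hδ : δ ≤ 1)
    (hN : 1 ≤ N) : δ / b ≤ a ^ (-N) := by
  have : 0 < b := ha.trans_le hab
  calc δ / b ≤ 1 / a := by gcongr
    _ = a ^ (-1 : ℝ) := by rw [Real.rpow_neg_one, one_div]
    _ ≤ a ^ (-N) := Real.rpow_le_rpow_of_exponent_ge ha ha1 (neg_le_neg hN)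

lemma cdConst_le_integral_sphericalIntegrand_of_mem_Icc {C α N a b δ t : ℝ} (hd : 2 ≤ d)
    (hcube : ∀ᵐ x ∂μ, x ∈ unitCube d) (hC : 0 ≤ C) (hα : 0 < α) (hα8 : α ≤ 1 / 8) (hN : 1 ≤ N)
    (ha : 0 < a) (ha4 : a ≤ 1 / 4) (hδ : δ ≤ 1 / 4) (hNα : ((d : ℝ) - 1) / 2 ≤ N * α)
    (hbδ : b ≤ δ) (hacd : a ≤ cdConst d)
    (hCb : C * b ^ (N * α - ((d : ℝ) - 1) / 2) ≤ cdConst d)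
    (henergy : energy μ (((d : ℝ) + 1) / 2 + α) ≤ ENNReal.ofReal C)
    (hgap : FmuInt μ (a ^ (-N)) - FmuInt μ (δ / b) ≤ a) (ht : t ∈ Icc a b) :
    cdConst d ≤ ∫ ξ, sphericalIntegrand μ t ξ := by
  obtain ⟨hat, htb⟩ := ht
  have two_le : (2 : ℝ) ≤ d := by exact_mod_cast hd
  have t_pos : 0 < t := ha.trans_le hat
  have b_pos : 0 < b := t_pos.trans_le htb
  have hab : a ≤ b := hat.trans htb
  have low_scale : t * (δ / b) ≤ 1 / 4 :=
    calc t * (δ / b) ≤ b * (δ / b) := mul_le_mul_of_nonneg_right htb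
          (div_nonneg (b_pos.le.trans hbδ) b_pos.le)
      _ = δ := mul_div_cancel₀ δ b_pos.ne'
      _ ≤ 1 / 4 := hδ
  have high_scale : ((d : ℝ) - 1) / 2 ≤ t * a ^ (-N) :=
    calc ((d : ℝ) - 1) / 2 ≤ N / 2 := by nlinarith
      _ ≤ a * a ^ (-N) := half_le_mul_rpow_neg ha ha4 hN
      _ ≤ t * a ^ (-N) := by gcongr
  have tail : C * (t ^ (-(((d : ℝ) - 1) / 2)) * (a ^ (-N)) ^ (-α)) ≤ cdConst d :=
    (mul_le_mul_of_nonneg_left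
      (rpow_neg_mul_rpow_neg_le ha hat hab (by linarith) hNα) hC).trans hCb
  exact cdConst_le_integral_sphericalIntegrand hd hcube t_pos ((one_le_div b_pos).2 hbδ)
    (div_le_rpow_neg ha (by linarith) hab (by linarith) hN) low_scale high_scale hα hα8 hC henergy
    (hgap.trans hacd) tail

end Parameters

section Distances

variable {d : ℕ} {μ : Measure (Euc d)}

lemma msupport_eq_support (μ : Measure (Euc d)) : msupport μ = μ.support := by
  ext x
  rw [nhds_basis_ball.mem_measureSupport]
  rfl

lemma isCompact_unitCube (d : ℕ) : IsCompact (unitCube d) := by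
  have isClosed : IsClosed (unitCube d) := by
    simp only [unitCube, ofPred_forall]
    exact isClosed_iInter fun i ↦ isClosed_Icc.preimage (by fun_prop)
  exact (isCompact_closedBall (cubeCenter d) _).of_isClosed_subset isClosed fun x hx ↦
    mem_closedBall_iff_norm.2 (norm_sub_cubeCenter_le hx)

lemma isCompact_msupport (hcube : μ (unitCube d)ᶜ = 0) : IsCompact (msupport μ) := by
  rw [msupport_eq_support]
  exact (isCompact_unitCube d).of_isClosed_subset Measure.isClosed_support
    (Measure.support_subset_of_isClosed (isCompact_unitCube d).isClosed hcube)

lemma isClosed_distSet {E F : Set (Euc d)} (hE : IsCompact E) (hF : IsCompact F) :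
    IsClosed (distSet E F) := by
  have image_eq : distSet E F = (fun p : Euc d × Euc d ↦ dist p.1 p.2) '' (E ×ˢ F) := by
    ext r
    simp [distSet]
  rw [image_eq]
  exact ((hE.prod hF).image (by fun_prop)).isClosed

lemma exists_le_abs_norm_sub_sub {E F : Set (Euc d)} (hE : IsCompact E) (hF : IsCompact F) {t : ℝ}
    (ht : t ∉ distSet E F) : ∃ η > 0, ∀ x ∈ E, ∀ y ∈ F, η ≤ |‖x - y‖ - t| := by
  obtain ⟨η, η_pos, ball_subset⟩ := isOpen_iff.1 (isClosed_distSet hE hF).isOpen_compl t ht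
  refine ⟨η, η_pos, fun x hx y hy ↦ not_lt.1 fun hlt ↦ ?_⟩
  exact ball_subset (mem_ball.2 hlt) ⟨x, hx, y, hy, dist_eq_norm x y⟩

/-- The law of `X - Y + t U` for independent `X`, `Y` distributed by `μ` and `U` uniform on the
unit sphere: it lives away from `0` when `t` stays away from the distances `|X - Y|`. -/
def sphericalDifferenceMeasure (μ : Measure (Euc d)) (t : ℝ) : Measure (Euc d) :=
  (differenceMeasure μ).conv ((ambientSphereMeasure d).map (t • ·))

lemma ae_sphericalDifferenceMeasure_le_norm {t η : ℝ} (ht : 0 ≤ t)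
    (hη : ∀ x ∈ msupport μ, ∀ y ∈ msupport μ, η ≤ |‖x - y‖ - t|) :
    ∀ᵐ z ∂sphericalDifferenceMeasure μ t, η ≤ ‖z‖ := by
  have mem_support : ∀ᵐ x ∂μ, x ∈ msupport μ := by
    rw [msupport_eq_support]
    exact Measure.support_mem_ae
  have le_norm_ae : ∀ᵐ p ∂(differenceMeasure μ).prod ((ambientSphereMeasure d).map (t • ·)),
      η ≤ ‖p.1 + p.2‖ := by
    have dist_ae : ∀ᵐ z ∂differenceMeasure μ, η ≤ |‖z‖ - t| := by
      rw [differenceMeasure, ae_map_iff (by fun_prop)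
        (measurableSet_le measurable_const (by fun_prop))]
      filter_upwards [Measure.quasiMeasurePreserving_fst.ae mem_support,
        Measure.quasiMeasurePreserving_snd.ae mem_support] with p hp₁ hp₂
      exact hη _ hp₁ _ hp₂
    have norm_ae : ∀ᵐ w ∂(ambientSphereMeasure d).map (t • ·), ‖w‖ = t := by
      rw [ae_map_iff (by fun_prop) (measurableSet_eq_fun (by fun_prop) measurable_const)]
      filter_upwards [(isUniformOnSphere_ambientSphereMeasure d).ae_norm_eq_one] with x hx
      rw [norm_smul, hx, Real.norm_of_nonneg ht, mul_one]
    filter_upwards [Measure.quasiMeasurePreserving_fst.ae dist_ae,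
      Measure.quasiMeasurePreserving_snd.ae norm_ae] with p hp₁ hp₂
    calc η ≤ |‖p.1‖ - ‖-p.2‖| := by rwa [norm_neg, hp₂]
      _ ≤ ‖p.1 - -p.2‖ := abs_norm_sub_norm_le _ _
      _ = ‖p.1 + p.2‖ := by rw [sub_neg_eq_add]
  rw [sphericalDifferenceMeasure, Measure.conv,
    ae_map_iff (by fun_prop) (measurableSet_le measurable_const measurable_norm)]
  exact le_norm_ae

variable [IsFiniteMeasure μ]

lemma isFiniteMeasure_sphericalDifferenceMeasure (hd : d ≠ 0) (t : ℝ) :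
    IsFiniteMeasure (sphericalDifferenceMeasure μ t) := by
  have := isProbabilityMeasure_ambientSphereMeasure hd
  rw [sphericalDifferenceMeasure]
  infer_instance

lemma re_charFun_sphericalDifferenceMeasure (hd : d ≠ 0) (t : ℝ) (ξ : Euc d) :
    (charFun (sphericalDifferenceMeasure μ t) ξ).re = sphericalIntegrand μ t ξ := by
  have := isProbabilityMeasure_ambientSphereMeasure hd
  rw [sphericalDifferenceMeasure, charFun_conv, charFun_differenceMeasure, charFun_map_smul,
    Complex.re_ofReal_mul, sphericalIntegrand, norm_fourierM, re_sphereFT_eq_re_charFun]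

theorem mem_distSet_of_integral_sphericalIntegrand_ne_zero (hd : d ≠ 0)
    (hcompact : IsCompact (msupport μ)) {t : ℝ} (ht : 0 ≤ t)
    (hint : Integrable (sphericalIntegrand μ t)) (hne : ∫ ξ, sphericalIntegrand μ t ξ ≠ 0) :
    t ∈ distSet (msupport μ) (msupport μ) := by
  by_contra not_mem
  obtain ⟨η, η_pos, gap⟩ := exists_le_abs_norm_sub_sub hcompact hcompact not_mem
  have := isFiniteMeasure_sphericalDifferenceMeasure (μ := μ) hd t
  have integral_eq_zero := integral_re_charFun_eq_zero (ν := sphericalDifferenceMeasure μ t) η_pos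
    (ae_sphericalDifferenceMeasure_le_norm ht gap)
  simp only [re_charFun_sphericalDifferenceMeasure hd t] at integral_eq_zero
  exact hne (integral_eq_zero hint)

end Distances

/-- Proposition 6.1: finite energy plus a spectral gap imply an interval of
distances.  If `C₀ ≥ 1`, `0 < α ≤ 1/8 < 1 < N`, `a, b, δ ∈ (0,1/4)` satisfy
`Nα > (d-1)/2`, `2b ≤ δ`, `a < b ≤ c_d`, `C₀ b^{Nα-(d-1)/2} < c_d`, then any
probability measure `μ` on `[0,1]^d` with `I_μ((d+1)/2 + α) ≤ C₀` and
`F_μ(a^{-N}) - F_μ(δ/b) ≤ a` satisfies `∫ |μ̂(ξ)|² σ̂(tξ) dξ ≥ c_d > 0` for all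
`t ∈ [a,b]`; in particular `Δ(supp μ) ⊇ [a,b]`. -/
theorem statement19 (d : ℕ) (hd : 2 ≤ d)
    (C₀ α N a b δ : ℝ) (hC₀ : 1 ≤ C₀)
    (hα0 : 0 < α) (hα : α ≤ 1/8) (hN : 1 < N)
    (ha : a ∈ Ioo (0:ℝ) (1/4)) (hb : b ∈ Ioo (0:ℝ) (1/4)) (hδ : δ ∈ Ioo (0:ℝ) (1/4))
    (hNα : ((d : ℝ) - 1) / 2 < N * α) (hbδ : 2 * b ≤ δ)
    (hab : a < b) (hbcd : b ≤ cdConst d)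
    (hC₀b : C₀ * b ^ (N * α - ((d : ℝ) - 1) / 2) < cdConst d)
    (μ : Measure (Euc d)) (hμ : IsProbabilityMeasure μ)
    (hsupp : μ (unitCube d)ᶜ = 0)
    (hen : energy μ (((d : ℝ) + 1) / 2 + α) ≤ ENNReal.ofReal C₀)
    (hgap : FmuInt μ (a ^ (-N)) - FmuInt μ (δ / b) ≤ a) :
    0 < cdConst d ∧
    (∀ t ∈ Icc a b,
      cdConst d ≤ ∫ ξ : Euc d, ‖fourierM μ ξ‖ ^ 2 * (sphereFT d (t • ξ)).re) ∧
    Icc a b ⊆ distSet (msupport μ) (msupport μ) := by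
  have d_ne : d ≠ 0 := by lia
  have two_le : (2 : ℝ) ≤ d := by exact_mod_cast hd
  have lower_bound : ∀ t ∈ Icc a b, cdConst d ≤ ∫ ξ, sphericalIntegrand μ t ξ := fun t ht ↦
    cdConst_le_integral_sphericalIntegrand_of_mem_Icc hd hsupp (by linarith) hα0 hα hN.le ha.1
      ha.2.le hδ.2.le hNα.le (by linarith [hb.1]) (by linarith) hC₀b.le hen hgap ht
  refine ⟨cdConst_pos d_ne, lower_bound, fun t ht ↦ ?_⟩
  have t_pos : 0 < t := ha.1.trans_le ht.1
  have integrable : Integrable (sphericalIntegrand μ t) :=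
    integrable_sphericalIntegrand hd t_pos hα0.le (by linarith)
      (ne_top_of_le_ne_top ENNReal.ofReal_ne_top hen)
  exact mem_distSet_of_integral_sphericalIntegrand_ne_zero d_ne (isCompact_msupport hsupp) t_pos.le
    integrable ((cdConst_pos d_ne).trans_le (lower_bound t ht)).ne'
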